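/- Let q be an even prime power with q ≥ 2048. Then every complete k-cap in PG(3, q) with k < q² + 1 satisfies k < q² − 2q + 3√q + 2 (so m′₂(3, q) < q² − 2q + 3√q + 2). -/

import Mathlib

open Module

/-- Points of the projective space `PG(n, q)` over the field `F` (with `q = |F|`). -/
abbrev PGPoint (F : Type*) [Field F] (n : ℕ) := Projectivization F (Fin (n + 1) → F)

/-- The set of projective points lying in the projective subspace determined by
a linear subspace `W`. -/
def ptsIn {F : Type*} [Field F] {n : ℕ} (W : Submodule F (Fin (n + 1) → F)) :
    Set (PGPoint F n) := {P | P.submodule ≤ W}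

/-- Three points of `PG(n, q)` are collinear if they lie on a common line. -/
def Coll3 {F : Type*} [Field F] {n : ℕ} (P₁ P₂ P₃ : PGPoint F n) : Prop :=
  Module.finrank F ↥(P₁.submodule ⊔ P₂.submodule ⊔ P₃.submodule) ≤ 2

/-- A cap (a plane arc when `n = 2`): a set of points no three of which are collinear. -/
def IsCap {F : Type*} [Field F] {n : ℕ} (K : Set (PGPoint F n)) : Prop :=
  ∀ P₁ ∈ K, ∀ P₂ ∈ K, ∀ P₃ ∈ K, P₁ ≠ P₂ → P₁ ≠ P₃ → P₂ ≠ P₃ → ¬ Coll3 P₁ P₂ P₃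

/-- A complete cap: a cap that is not contained in a cap with one more point. -/
def IsCompleteCap {F : Type*} [Field F] {n : ℕ} (K : Set (PGPoint F n)) : Prop :=
  IsCap K ∧ ∀ P ∉ K, ¬ IsCap (insert P K)

/-- A tangent line of `K`: a line (2-dimensional linear subspace) meeting `K`
in exactly one point. -/
def IsTangent {F : Type*} [Field F] {n : ℕ} (K : Set (PGPoint F n))
    (W : Submodule F (Fin (n + 1) → F)) : Prop :=
  Module.finrank F W = 2 ∧ (ptsIn W ∩ K).ncard = 1

/-!
Let `K` be a complete cap of `PG(3, q)`, `q` even, and let `t = q² + q + 2 - |K|`, which is the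
number of tangents at each point of `K`. In characteristic two the product of Segre's tangent
functions around a triangle is `1`, and interpolation turns this into an upper bound for the number
of tangents through a point on a bisecant: it is at most `t`. By completeness the bound holds at
every point off `K`. Counting the tangents that meet a fixed tangent `l` outside `K`, where `l`
touches `K` at `x`, shows that the `t` tangents at `x`, viewed as points of the quotient plane at
`x`, are concentrated on lines containing many of them; when `q + 1 < t ≤ 3q - 7` two lines with `q`
or `q + 1` of these points must cover them all. This determines how many planes through `x` meet `K`
in `q + 1` and in `q + 2` points, and counting incident pairs of such a plane and a point of `K`
gives a contradiction, since the number of pairs has to be divisible by `q + 1` or by `q + 2`.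
-/

namespace CapTangents

open Finset
open scoped Classical LinearAlgebra.Projectivization

section LinearSpace

variable {α β : Type*} {T : Finset α} {Λ J : Finset β} {R : α → β → Prop} {p p₁ p₂ : β} {x : α}

/-- The points in `T` and the lines in `Λ`, with incidence relation `R`, form a linear space: two
distinct points are on exactly one line. A line may have fewer than two points. -/
def IsLinearSpace (T : Finset α) (Λ : Finset β) (R : α → β → Prop) : Prop :=
  ∀ x ∈ T, ∀ y ∈ T, x ≠ y → ∃! p, p ∈ Λ ∧ R x p ∧ R y p

/-- The number of points of `T` on the line `p`. -/
noncomputable def lineCard (T : Finset α) (R : α → β → Prop) (p : β) : ℕ := #{x ∈ T | R x p}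

theorem sum_lineCard_mul_eq_sum_sum (T : Finset α) (Λ : Finset β) (R : α → β → Prop)
    {A : Type*} [NonAssocSemiring A] (f : β → A) :
    ∑ p ∈ Λ, lineCard T R p * f p = ∑ x ∈ T, ∑ p ∈ Λ with R x p, f p := by
  simp only [lineCard, ← nsmul_eq_mul, ← sum_const, sum_filter]
  exact sum_comm

namespace IsLinearSpace

variable (h : IsLinearSpace T Λ R)
include h

theorem card_points_on_two_lines_le_one (hp₁ : p₁ ∈ Λ) (hp₂ : p₂ ∈ Λ) (hne : p₁ ≠ p₂) :
    #{x ∈ T | R x p₁ ∧ R x p₂} ≤ 1 := by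
  refine card_le_one.mpr fun x hx y hy => by_contra fun hxy => hne ?_
  rw [mem_filter] at hx hy
  exact (h x hx.1 y hy.1 hxy).unique ⟨hp₁, hx.2.1, hy.2.1⟩ ⟨hp₂, hx.2.2, hy.2.2⟩

theorem lineCard_le_card (hp : p ∈ Λ) (hJ : J ⊆ Λ) (hpJ : p ∉ J)
    (hcov : ∀ x ∈ T, R x p → ∃ g ∈ J, R x g) : lineCard T R p ≤ #J := by
  have hsub : {x ∈ T | R x p} ⊆ J.biUnion fun g => {x ∈ T | R x p ∧ R x g} := fun x hx => by
    obtain ⟨hxT, hxp⟩ := mem_filter.mp hx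
    obtain ⟨g, hg, hxg⟩ := hcov x hxT hxp
    exact mem_biUnion.mpr ⟨g, hg, mem_filter.mpr ⟨hxT, hxp, hxg⟩⟩
  calc lineCard T R p ≤ _ := card_le_card hsub
    _ ≤ #J * 1 := card_biUnion_le_card_mul _ _ _ fun g hg =>
        h.card_points_on_two_lines_le_one hp (hJ hg) fun hpg => hpJ (hpg ▸ hg)
    _ = #J := mul_one _

theorem sum_choose_two_le (hJ : J ⊆ Λ) :
    ∑ x ∈ T, (#{p ∈ J | R x p}).choose 2 ≤ (#J).choose 2 := by
  simp only [← card_powersetCard]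
  rw [← card_biUnion]
  · exact card_le_card <| biUnion_subset.mpr fun x _ => powersetCard_mono (filter_subset _ _)
  intro x hx y hy hxy
  refine disjoint_left.mpr fun s hsx hsy => ?_
  rw [mem_powersetCard] at hsx hsy
  obtain ⟨p₁, hp₁, p₂, hp₂, hne⟩ := one_lt_card.mp (hsx.2 ▸ one_lt_two)
  have hx₁ := mem_filter.mp (hsx.1 hp₁)
  have hx₂ := mem_filter.mp (hsx.1 hp₂)
  have hy₁ := mem_filter.mp (hsy.1 hp₁)
  have hy₂ := mem_filter.mp (hsy.1 hp₂)
  exact hne <| (h x hx y hy hxy).unique ⟨hJ hx₁.1, hx₁.2, hy₁.2⟩ ⟨hJ hx₂.1, hx₂.2, hy₂.2⟩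

theorem sum_lineCard_le (hJ : J ⊆ Λ) : ∑ p ∈ J, lineCard T R p ≤ #T + (#J).choose 2 := by
  have hdeg (d : ℕ) : d ≤ 1 + d.choose 2 := by
    rcases d with _ | d
    · exact Nat.zero_le _
    · rw [Nat.choose_succ_succ, Nat.choose_one_right]; omega
  calc ∑ p ∈ J, lineCard T R p = ∑ x ∈ T, #{p ∈ J | R x p} := by
        simpa using sum_lineCard_mul_eq_sum_sum T J R fun _ => (1 : ℕ)
    _ ≤ ∑ x ∈ T, (1 + (#{p ∈ J | R x p}).choose 2) := sum_le_sum fun x _ => hdeg _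
    _ = #T + ∑ x ∈ T, (#{p ∈ J | R x p}).choose 2 := by simp [sum_add_distrib]
    _ ≤ #T + (#J).choose 2 := Nat.add_le_add_left (h.sum_choose_two_le hJ) _

theorem mul_le_card_add_choose_two {n c : ℕ} (hJ : J ⊆ Λ) (hn : n ≤ #J)
    (hc : ∀ p ∈ J, c ≤ lineCard T R p) : n * c ≤ #T + n.choose 2 := by
  obtain ⟨J', hJ', rfl⟩ := exists_subset_card_eq hn
  calc #J' * c ≤ ∑ p ∈ J', lineCard T R p := card_nsmul_le_sum J' _ c fun p hp => hc p (hJ' hp)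
    _ ≤ #T + (#J').choose 2 := h.sum_lineCard_le (hJ'.trans hJ)

theorem sum_lineCard_sub_one (hx : x ∈ T) :
    ∑ p ∈ Λ with R x p, ((lineCard T R p : ℤ) - 1) = #T - 1 := by
  have herase (p : β) (hp : p ∈ {p ∈ Λ | R x p}) :
      (lineCard T R p : ℤ) - 1 = #{y ∈ T.erase x | R y p} := by
    have hmem : x ∈ {y ∈ T | R y p} := mem_filter.mpr ⟨hx, (mem_filter.mp hp).2⟩
    rw [filter_erase, cast_card_erase_of_mem hmem, lineCard]
  have hjoin (y : α) (hy : y ∈ T.erase x) : #{p ∈ {p ∈ Λ | R x p} | R y p} = 1 := by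
    obtain ⟨hyx, hyT⟩ := mem_erase.mp hy
    rw [filter_filter, card_eq_one_iff_existsUnique]
    simpa only [mem_filter] using h x hx y hyT hyx.symm
  rw [sum_congr rfl herase, ← cast_card_erase_of_mem hx]
  have hcount : ∑ p ∈ Λ with R x p, #{y ∈ T.erase x | R y p} = #(T.erase x) := by
    simpa [lineCard, sum_congr rfl hjoin] using
      sum_lineCard_mul_eq_sum_sum (T.erase x) {p ∈ Λ | R x p} R fun _ => (1 : ℕ)
  exact_mod_cast hcount

theorem sum_lineCard_mul_sub_one_le {c : ℤ} (hx : x ∈ T) (hp : p ∈ Λ) (hxp : R x p)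
    (hc : ∀ p' ∈ Λ, p' ≠ p → R x p' → lineCard T R p' ≤ c) :
    ∑ p' ∈ Λ with R x p', (lineCard T R p' : ℤ) * (lineCard T R p' - 1) ≤
      lineCard T R p * (lineCard T R p - 1) + c * (#T - lineCard T R p) := by
  have hmem : p ∈ {p' ∈ Λ | R x p'} := mem_filter.mpr ⟨hp, hxp⟩
  have hsum := h.sum_lineCard_sub_one hx
  rw [← add_sum_erase _ _ hmem] at hsum ⊢
  have hrest : ∑ p' ∈ {p' ∈ Λ | R x p'}.erase p, (lineCard T R p' : ℤ) * (lineCard T R p' - 1) ≤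
      c * ∑ p' ∈ {p' ∈ Λ | R x p'}.erase p, ((lineCard T R p' : ℤ) - 1) := by
    rw [mul_sum]
    refine sum_le_sum fun p' hp' => ?_
    obtain ⟨hne, hp'Λ, hxp'⟩ : p' ≠ p ∧ p' ∈ Λ ∧ R x p' := by simpa using hp'
    have hpos : 0 < lineCard T R p' := card_pos.mpr ⟨x, mem_filter.mpr ⟨hx, hxp'⟩⟩
    exact mul_le_mul_of_nonneg_right (hc p' hp'Λ hne hxp') (by omega)
  linear_combination hrest + c * hsum

theorem exists_line (hx : x ∈ T) (hT : 1 < #T) : ∃ p ∈ Λ, R x p := by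
  obtain ⟨y, hy, hyx⟩ := exists_mem_ne hT x
  obtain ⟨p, hp, hxp, -⟩ := (h x hx y hy hyx.symm).exists
  exact ⟨p, hp, hxp⟩

end IsLinearSpace

section TwoLines

/-- The lines of `Λ` with at least `3 * q / 4` points of `T`; in the geometric application `q + 1`
bounds the number of points on a line. -/
noncomputable def largeLines (T : Finset α) (Λ : Finset β) (R : α → β → Prop) (q : ℕ) : Finset β :=
  {p ∈ Λ | 3 * q ≤ 4 * lineCard T R p}

variable {q : ℕ}

theorem mem_largeLines : p ∈ largeLines T Λ R q ↔ p ∈ Λ ∧ 3 * q ≤ 4 * lineCard T R p :=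
  mem_filter

theorem largeLines_subset : largeLines T Λ R q ⊆ Λ := filter_subset _ _

variable (hT : #T + 7 ≤ 3 * q) (h : IsLinearSpace T Λ R)
include hT h

theorem card_largeLines_le_three : #(largeLines T Λ R q) ≤ 3 := by
  by_contra! hcard
  have hge : ∀ p ∈ largeLines T Λ R q, (3 * q + 3) / 4 ≤ lineCard T R p :=
    fun p hp => by have := (mem_largeLines.mp hp).2; omega
  have := h.mul_le_card_add_choose_two (n := 4) largeLines_subset hcard hge
  have : Nat.choose 4 2 = 6 := rfl
  omega

variable (hq : 256 ≤ q)
  (hlow : ∀ x ∈ T, (q ^ 2 + q : ℤ) ≤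
    ∑ p ∈ Λ with R x p, (lineCard T R p : ℤ) * (lineCard T R p - 1))
include hq hlow

theorem exists_mem_largeLines_or_two_lines (hx : x ∈ T) :
    (∃ p ∈ largeLines T Λ R q, R x p) ∨
      ∀ p ∈ Λ, R x p → ∃ p' ∈ Λ, p' ≠ p ∧ R x p' ∧ 3 * q ≤ 16 * lineCard T R p' := by
  by_contra! ⟨hsmall, p, hp, hxp, hother⟩
  have hbound := (hlow x hx).trans <|
    h.sum_lineCard_mul_sub_one_le (c := (3 * q / 16 : ℕ)) hx hp hxp fun p' hp' hne hxp' => by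
      have := hother p' hp' hne hxp'; omega
  have hm : ¬ 3 * q ≤ 4 * lineCard T R p := fun hm => hsmall p (mem_largeLines.mpr ⟨hp, hm⟩) hxp
  have hmT : lineCard T R p ≤ #T := card_filter_le _ _
  have hc : 16 * (3 * q / 16) ≤ 3 * q := Nat.mul_div_le _ _
  generalize lineCard T R p = m at hbound hm hmT
  generalize 3 * q / 16 = c at hbound hc
  zify at hm hmT hc hT hq
  have hrest : (16 * c : ℤ) * (#T - m) ≤ 3 * q * (3 * q - m) :=
    mul_le_mul hc (by linarith) (by linarith) (by linarith)
  nlinarith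

theorem exists_other_line (hp : p ∈ Λ) (hpl : p ∉ largeLines T Λ R q) (hx : x ∈ T)
    (hxp : R x p) : ∃ p' ∈ Λ, p' ≠ p ∧ R x p' ∧ 3 * q ≤ 16 * lineCard T R p' := by
  rcases exists_mem_largeLines_or_two_lines hT h hq hlow hx with ⟨p', hp', hxp'⟩ | htwo
  · have hlarge := mem_largeLines.mp hp'
    exact ⟨p', hlarge.1, fun he => hpl (he ▸ hp'), hxp', by omega⟩
  · exact htwo p hp hxp

theorem lineCard_le_nineteen (hp : p ∈ Λ) (hpl : p ∉ largeLines T Λ R q) :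
    lineCard T R p ≤ 19 := by
  set H := {p' ∈ Λ | 3 * q ≤ 16 * lineCard T R p'}
  have hcardH : #H ≤ 19 := by
    by_contra! hcard
    have hge : ∀ p' ∈ H, (3 * q + 15) / 16 ≤ lineCard T R p' := fun p' hp' => by
      have := (mem_filter.mp hp').2; omega
    have := h.mul_le_card_add_choose_two (n := 20) (filter_subset _ _) hcard hge
    have : Nat.choose 20 2 = 190 := rfl
    omega
  calc lineCard T R p ≤ #(H.erase p) :=
        h.lineCard_le_card hp ((erase_subset _ _).trans (filter_subset _ _)) (notMem_erase _ _)
          fun x hx hxp => by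
            obtain ⟨p', hp', hne, hxp', hheavy⟩ := exists_other_line hT h hq hlow hp hpl hx hxp
            exact ⟨p', mem_erase.mpr ⟨hne, mem_filter.mpr ⟨hp', hheavy⟩⟩, hxp'⟩
    _ ≤ #H := card_erase_le
    _ ≤ 19 := hcardH

variable (hT' : q + 1 < #T)
include hT'

theorem exists_mem_largeLines (hx : x ∈ T) : ∃ p ∈ largeLines T Λ R q, R x p := by
  by_contra! hsmall
  have hle (p : β) (hp : p ∈ Λ) (hxp : R x p) : lineCard T R p ≤ 19 :=
    lineCard_le_nineteen hT h hq hlow hp fun hpl => hsmall p hpl hxp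
  obtain ⟨p, hp, hxp⟩ := h.exists_line hx (by omega)
  have hbound := (hlow x hx).trans <| h.sum_lineCard_mul_sub_one_le (c := 19) hx hp hxp
    fun p' hp' _ hxp' => by exact_mod_cast hle p' hp' hxp'
  have hp19 := hle p hp hxp
  zify at hp19 hT hq
  nlinarith

theorem quadratic_le_of_mem_largeLines (hp : p ∈ largeLines T Λ R q) :
    (q ^ 2 + q : ℤ) ≤ lineCard T R p * (lineCard T R p - 1) +
      #(largeLines T Λ R q) * (#T - lineCard T R p) := by
  obtain ⟨hpΛ, hplarge⟩ := mem_largeLines.mp hp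
  -- A point of `p` on no other large line exists, and the small lines through it meet `T` in at
  -- most one point of each large line.
  obtain ⟨x, hx, hxp, hprivate⟩ : ∃ x ∈ T, R x p ∧ ∀ g ∈ (largeLines T Λ R q).erase p, ¬ R x g := by
    by_contra! hcov
    have := h.lineCard_le_card hpΛ ((erase_subset _ _).trans largeLines_subset)
      (notMem_erase _ _) hcov
    have := card_largeLines_le_three hT h
    have : #((largeLines T Λ R q).erase p) ≤ #(largeLines T Λ R q) := card_erase_le
    omega
  refine (hlow x hx).trans <| h.sum_lineCard_mul_sub_one_le hx hpΛ hxp fun p' hp' hne hxp' => ?_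
  have hsmall : p' ∉ largeLines T Λ R q := fun hp'l =>
    hprivate p' (mem_erase.mpr ⟨hne, hp'l⟩) hxp'
  exact Int.ofNat_le.mpr <| h.lineCard_le_card hp' largeLines_subset hsmall fun y hy _ =>
    exists_mem_largeLines hT h hq hlow hT' hy

theorem card_largeLines_ne_three : #(largeLines T Λ R q) ≠ 3 := fun hcard => by
  have hge : ∀ g ∈ largeLines T Λ R q, q - 1 ≤ lineCard T R g := fun g hg => by
    have hquad := quadratic_le_of_mem_largeLines hT h hq hlow hT' hg
    have hlarge := (mem_largeLines.mp hg).2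
    rw [hcard] at hquad
    by_contra! hlt
    generalize lineCard T R g = m at hquad hlt hlarge
    zify [show 1 ≤ q by omega] at hlt hlarge hT hq
    push_cast at hquad
    nlinarith
  have := h.mul_le_card_add_choose_two largeLines_subset hcard.ge hge
  have : Nat.choose 3 2 = 3 := rfl
  omega

theorem card_largeLines_eq_two (hm : ∀ p ∈ Λ, lineCard T R p ≤ q + 1) :
    #(largeLines T Λ R q) = 2 := by
  have hle := card_largeLines_le_three hT h
  have hne := card_largeLines_ne_three hT h hq hlow hT'
  have hcov {x : α} (hx : x ∈ T) := exists_mem_largeLines hT h hq hlow hT' hx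
  obtain ⟨x, hx⟩ : T.Nonempty := card_pos.mp (by omega)
  obtain ⟨p, hp, -⟩ := hcov hx
  have hpos := card_pos.mpr ⟨p, hp⟩
  suffices #(largeLines T Λ R q) ≠ 1 by omega
  intro hone
  have hall : {x ∈ T | R x p} = T := filter_true_of_mem fun x hx => by
    obtain ⟨g, hg, hxg⟩ := hcov hx
    rwa [card_le_one.mp hone.le p hp g hg]
  have := hm p (largeLines_subset hp)
  rw [lineCard, hall] at this
  omega

theorem exists_two_covering_lines (hm : ∀ p ∈ Λ, lineCard T R p ≤ q + 1) :
    ∃ p₁ ∈ Λ, ∃ p₂ ∈ Λ, p₁ ≠ p₂ ∧ (∀ x ∈ T, R x p₁ ∨ R x p₂) ∧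
      q ≤ lineCard T R p₁ ∧ q ≤ lineCard T R p₂ := by
  have hcard := card_largeLines_eq_two hT h hq hlow hT' hm
  have hge {p : β} (hp : p ∈ largeLines T Λ R q) : q ≤ lineCard T R p := by
    have hquad := quadratic_le_of_mem_largeLines hT h hq hlow hT' hp
    have hlarge := (mem_largeLines.mp hp).2
    rw [hcard] at hquad
    by_contra! hlt
    generalize lineCard T R p = m at hquad hlt hlarge
    zify at hlt hlarge hT hq
    push_cast at hquad
    nlinarith
  have hcov {x : α} (hx : x ∈ T) := exists_mem_largeLines hT h hq hlow hT' hx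
  obtain ⟨p₁, p₂, hne, hpair⟩ := card_eq_two.mp hcard
  have h₁ : p₁ ∈ largeLines T Λ R q := by simp [hpair]
  have h₂ : p₂ ∈ largeLines T Λ R q := by simp [hpair]
  refine ⟨p₁, largeLines_subset h₁, p₂, largeLines_subset h₂, hne, fun x hx => ?_, hge h₁, hge h₂⟩
  simpa [hpair] using hcov hx

end TwoLines

section Counting

variable {q : ℕ} (h : IsLinearSpace T Λ R)

theorem sum_lineCard (hdeg : ∀ x ∈ T, #{p ∈ Λ | R x p} = q + 1) :
    ∑ p ∈ Λ, (lineCard T R p : ℤ) = #T * (q + 1) := by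
  have := sum_lineCard_mul_eq_sum_sum T Λ R fun _ => (1 : ℤ)
  simp only [mul_one, sum_const, nsmul_eq_mul] at this
  rw [this, sum_congr rfl fun x hx => by rw [hdeg x hx], sum_const, nsmul_eq_mul, Nat.cast_succ]

include h

theorem sum_lineCard_mul_sub_one :
    ∑ p ∈ Λ, (lineCard T R p : ℤ) * (lineCard T R p - 1) = #T * (#T - 1) := by
  rw [sum_lineCard_mul_eq_sum_sum, sum_congr rfl fun x hx => h.sum_lineCard_sub_one hx, sum_const,
    nsmul_eq_mul]

variable (hp₁ : p₁ ∈ Λ) (hp₂ : p₂ ∈ Λ) (hne : p₁ ≠ p₂) (hcov : ∀ x ∈ T, R x p₁ ∨ R x p₂)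
include hp₁ hp₂ hne hcov

theorem sum_comp_lineCard_of_two_covering_lines {f g : ℕ → ℤ} (hfg : ∀ k ≤ 2, f k = g k) :
    ∑ p ∈ Λ, f (lineCard T R p) = ∑ p ∈ Λ, g (lineCard T R p) -
      (g (lineCard T R p₁) - f (lineCard T R p₁)) -
      (g (lineCard T R p₂) - f (lineCard T R p₂)) := by
  have hrest : ∑ p ∈ (Λ.erase p₁).erase p₂, f (lineCard T R p) =
      ∑ p ∈ (Λ.erase p₁).erase p₂, g (lineCard T R p) := sum_congr rfl fun p hp => by
    obtain ⟨hpp₂, hpp₁, hp⟩ : p ≠ p₂ ∧ p ≠ p₁ ∧ p ∈ Λ := by simpa using hp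
    have hle : lineCard T R p ≤ #{p₁, p₂} := h.lineCard_le_card hp
      (insert_subset hp₁ (singleton_subset_iff.mpr hp₂)) (by simp [hpp₁, hpp₂])
      fun x hx _ => by simpa using hcov x hx
    exact hfg _ (hle.trans card_le_two)
  have hp₂' : p₂ ∈ Λ.erase p₁ := mem_erase.mpr ⟨hne.symm, hp₂⟩
  rw [← add_sum_erase _ _ hp₁, ← add_sum_erase _ _ hp₂', hrest,
    ← add_sum_erase _ (fun p => g (lineCard T R p)) hp₁,
    ← add_sum_erase _ (fun p => g (lineCard T R p)) hp₂']
  ring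

variable (hdeg : ∀ x ∈ T, #{p ∈ Λ | R x p} = q + 1)
  (h₁ : 2 < lineCard T R p₁) (h₂ : 2 < lineCard T R p₂)
include hdeg h₁ h₂

theorem card_lineCard_eq_one_of_two_covering_lines :
    (#{p ∈ Λ | lineCard T R p = 1} : ℤ) = #T * (q + 2 - #T)
      - lineCard T R p₁ * (2 - lineCard T R p₁) - lineCard T R p₂ * (2 - lineCard T R p₂) := by
  have hsum := sum_comp_lineCard_of_two_covering_lines h hp₁ hp₂ hne hcov
    (f := fun k => if k = 1 then 1 else 0) (g := fun k => k - k * (k - 1))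
    fun k hk => by interval_cases k <;> simp
  simp only [sum_boole, sum_sub_distrib, sum_lineCard hdeg, sum_lineCard_mul_sub_one h,
    if_neg (show lineCard T R p₁ ≠ 1 by omega), if_neg (show lineCard T R p₂ ≠ 1 by omega)] at hsum
  rw [hsum]
  ring

theorem card_lineCard_eq_zero_of_two_covering_lines :
    (2 * #{p ∈ Λ | lineCard T R p = 0} : ℤ) = 2 * #Λ - #T * (2 * q + 3 - #T)
      - (lineCard T R p₁ - 1) * (lineCard T R p₁ - 2)
      - (lineCard T R p₂ - 1) * (lineCard T R p₂ - 2) := by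
  have hsum := sum_comp_lineCard_of_two_covering_lines h hp₁ hp₂ hne hcov
    (f := fun k => if k = 0 then 2 else 0) (g := fun k => 2 - 2 * k + k * (k - 1))
    fun k hk => by interval_cases k <;> simp
  simp only [sum_add_distrib, sum_sub_distrib, ← mul_sum, sum_lineCard hdeg,
    sum_lineCard_mul_sub_one h, if_neg (show lineCard T R p₁ ≠ 0 by omega),
    if_neg (show lineCard T R p₂ ≠ 0 by omega), sum_const, nsmul_eq_mul] at hsum
  have hcount : ∑ p ∈ Λ, (if lineCard T R p = 0 then (2 : ℤ) else 0) =
      2 * #{p ∈ Λ | lineCard T R p = 0} := by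
    rw [← sum_filter, sum_const, nsmul_eq_mul, mul_comm]
  rw [← hcount, hsum]
  ring

end Counting

end LinearSpace

section Flats

variable {F V : Type*} [Field F] [AddCommGroup V] [Module F V]
  {W U Z : Submodule F V} {x y : ℙ F V} {n : ℕ}

local notation "q" => Fintype.card F

theorem submodule_le_submodule_iff : x.submodule ≤ y.submodule ↔ x = y := by
  refine ⟨fun hxy => Projectivization.submodule_injective ?_, fun hxy => hxy ▸ le_rfl⟩
  exact Submodule.eq_of_le_of_finrank_eq hxy (by simp only [Projectivization.finrank_submodule])

theorem submodule_le_iff_rep_mem : x.submodule ≤ W ↔ x.rep ∈ W := by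
  rw [Projectivization.submodule_eq, Submodule.span_singleton_le_iff_mem]

/-- The number of points of `K` in the subspace `W`. -/
noncomputable def secCard (K : Finset (ℙ F V)) (W : Submodule F V) : ℕ :=
  #{x ∈ K | x.submodule ≤ W}

theorem secCard_top (K : Finset (ℙ F V)) : secCard K ⊤ = #K := by
  simp only [secCard, le_top, filter_true]

theorem secCard_pos {K : Finset (ℙ F V)} (hx : x ∈ K) (hxW : x.submodule ≤ W) : 0 < secCard K W :=
  card_pos.mpr ⟨x, mem_filter.mpr ⟨hx, hxW⟩⟩

theorem eq_of_secCard_eq_one {K : Finset (ℙ F V)} (hW : secCard K W = 1) (hx : x ∈ K)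
    (hy : y ∈ K) (hxW : x.submodule ≤ W) (hyW : y.submodule ≤ W) : x = y :=
  card_le_one.mp hW.le x (mem_filter.mpr ⟨hx, hxW⟩) y (mem_filter.mpr ⟨hy, hyW⟩)

theorem secCard_submodule (K : Finset (ℙ F V)) (x : ℙ F V) :
    secCard K x.submodule = if x ∈ K then 1 else 0 := by
  simp only [secCard, submodule_le_submodule_iff]
  split_ifs with hx
  · exact card_eq_one.mpr ⟨x, by simpa [Finset.ext_iff] using hx⟩
  · exact card_eq_zero.mpr <| filter_eq_empty_iff.mpr fun y hy hyx => hx (hyx ▸ hy)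

theorem secCard_of_forall_mem [Fintype F] {S : Finset (ℙ F V)} (hS : ∀ x, x ∈ S)
    (W : Submodule F V) : secCard S W = ∑ i ∈ range (finrank F W), q ^ i := by
  have hmap (x : ℙ F W) :
      Projectivization.map W.subtype W.injective_subtype x ∈ {x ∈ S | x.submodule ≤ W} := by
    refine mem_filter.mpr ⟨hS _, ?_⟩
    induction x with
    | h v _ => simp [Projectivization.map_mk]
  have hbij : Function.Bijective fun x : ℙ F W =>
      (⟨_, hmap x⟩ : {y // y ∈ {x ∈ S | x.submodule ≤ W}}) := by
    refine ⟨fun x y hxy => Projectivization.map_injective _ W.injective_subtype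
      (Subtype.ext_iff.mp hxy), fun ⟨y, hy⟩ => ?_⟩
    have hyW : y.rep ∈ W := submodule_le_iff_rep_mem.mp (mem_filter.mp hy).2
    refine ⟨.mk F ⟨y.rep, hyW⟩ (by simpa using y.rep_nonzero), Subtype.ext ?_⟩
    simp only [Projectivization.map_mk, Submodule.subtype_apply, Projectivization.mk_rep]
  rw [← Nat.card_eq_fintype_card, ← Projectivization.card_of_finrank F W rfl,
    Nat.card_congr (Equiv.ofBijective _ hbij), Nat.card_eq_fintype_card, Fintype.card_coe, secCard]

section FiniteDimensional

variable [FiniteDimensional F V]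

theorem finrank_sup_submodule (hx : ¬ x.submodule ≤ W) :
    finrank F ↥(W ⊔ x.submodule) = finrank F W + 1 := by
  have hinf : finrank F ↥(W ⊓ x.submodule) = 0 := by
    have hlt : W ⊓ x.submodule < x.submodule := inf_lt_right.mpr hx
    have := Submodule.finrank_lt_finrank_of_lt hlt
    rw [x.finrank_submodule] at this
    omega
  have := Submodule.finrank_sup_add_finrank_inf_eq W x.submodule
  rwa [hinf, x.finrank_submodule] at this

theorem finrank_submodule_sup_submodule (hxy : x ≠ y) :
    finrank F ↥(x.submodule ⊔ y.submodule) = 2 := by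
  rw [finrank_sup_submodule fun hyx => hxy (submodule_le_submodule_iff.mp hyx).symm,
    x.finrank_submodule]

theorem sup_submodule_eq (hWU : W ≤ U) (hU : finrank F U = finrank F W + 1)
    (hxU : x.submodule ≤ U) (hxW : ¬ x.submodule ≤ W) : W ⊔ x.submodule = U :=
  Submodule.eq_of_le_of_finrank_eq (sup_le hWU hxU) (by rw [finrank_sup_submodule hxW, hU])

theorem submodule_sup_submodule_eq (hU : finrank F U = 2) (hxy : x ≠ y) (hx : x.submodule ≤ U)
    (hy : y.submodule ≤ U) : x.submodule ⊔ y.submodule = U :=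
  sup_submodule_eq hx (by rw [hU, x.finrank_submodule]) hy
    fun hyx => hxy (submodule_le_submodule_iff.mp hyx).symm

end FiniteDimensional

variable [Finite V]

/-- The subspaces of dimension `n` between `W` and `Z`. As `n` is the dimension over `F`, the lines
of the projective space are the case `n = 2`, and its planes are the case `n = 3`. -/
noncomputable def flats (n : ℕ) (W Z : Submodule F V) : Finset (Submodule F V) :=
  (Set.toFinite {U : Submodule F V | finrank F U = n ∧ W ≤ U ∧ U ≤ Z}).toFinset

theorem mem_flats : U ∈ flats n W Z ↔ finrank F U = n ∧ W ≤ U ∧ U ≤ Z :=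
  Set.Finite.mem_toFinset _

-- Each point of `S` in `Z` but not in `W` spans, together with `W`, a unique member of the sum.
theorem sum_flats_sub_mul (S : Finset (ℙ F V)) (hWZ : W ≤ Z) (g : Submodule F V → ℤ) :
    ∑ U ∈ flats (finrank F W + 1) W Z, ((secCard S U : ℤ) - secCard S W) * g U =
      ∑ x ∈ S with x.submodule ≤ Z ∧ ¬ x.submodule ≤ W, g (W ⊔ x.submodule) := by
  have hmaps : ∀ x ∈ {x ∈ S | x.submodule ≤ Z ∧ ¬ x.submodule ≤ W},
      W ⊔ x.submodule ∈ flats (finrank F W + 1) W Z := fun x hx => by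
    obtain ⟨-, hxZ, hxW⟩ := mem_filter.mp hx
    exact mem_flats.mpr ⟨finrank_sup_submodule hxW, le_sup_left, sup_le hWZ hxZ⟩
  rw [← sum_fiberwise_of_maps_to hmaps]
  refine sum_congr rfl fun U hU => ?_
  obtain ⟨hUr, hWU, hUZ⟩ := mem_flats.mp hU
  have hfiber : {x ∈ {x ∈ S | x.submodule ≤ Z ∧ ¬ x.submodule ≤ W} | W ⊔ x.submodule = U} =
      {x ∈ S | x.submodule ≤ U} \ {x ∈ S | x.submodule ≤ W} := by
    ext x
    simp only [mem_filter, mem_sdiff]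
    constructor
    · rintro ⟨⟨hxS, -, hxW⟩, rfl⟩
      exact ⟨⟨hxS, le_sup_right⟩, fun hx => hxW hx.2⟩
    · rintro ⟨⟨hxS, hxU⟩, hx⟩
      have hxW : ¬ x.submodule ≤ W := fun hxW => hx ⟨hxS, hxW⟩
      exact ⟨⟨hxS, hxU.trans hUZ, hxW⟩, sup_submodule_eq hWU hUr hxU hxW⟩
  have hsub : {x ∈ S | x.submodule ≤ W} ⊆ {x ∈ S | x.submodule ≤ U} :=
    monotone_filter_right _ fun x _ hx => hx.trans hWU
  rw [sum_congr rfl fun x hx => by rw [(mem_filter.mp hx).2], sum_const, hfiber, nsmul_eq_mul,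
    cast_card_sdiff hsub, secCard, secCard]

theorem sum_flats_sub (S : Finset (ℙ F V)) (hWZ : W ≤ Z) :
    ∑ U ∈ flats (finrank F W + 1) W Z, ((secCard S U : ℤ) - secCard S W) =
      secCard S Z - secCard S W := by
  have hsub : {x ∈ S | x.submodule ≤ W} ⊆ {x ∈ S | x.submodule ≤ Z} :=
    monotone_filter_right _ fun x _ hx => hx.trans hWZ
  have := sum_flats_sub_mul S hWZ fun _ => 1
  simp only [mul_one, sum_const, nsmul_eq_mul] at this
  rw [this, secCard, secCard, ← cast_card_sdiff hsub]
  congr 2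
  ext x
  simp only [mem_filter, mem_sdiff]
  tauto

variable [Fintype F]

theorem card_flats_succ {m : ℕ} (hWZ : W ≤ Z) (hZ : finrank F Z = finrank F W + m) :
    #(flats (finrank F W + 1) W Z) = ∑ i ∈ range m, q ^ i := by
  obtain ⟨S, hS⟩ : ∃ S : Finset (ℙ F V), ∀ x, x ∈ S :=
    ⟨(Set.toFinite Set.univ).toFinset, by simp⟩
  have hsum := sum_flats_sub S hWZ
  have hgeom : ∑ i ∈ range (finrank F W + m), q ^ i =
      ∑ i ∈ range (finrank F W), q ^ i + q ^ finrank F W * ∑ i ∈ range m, q ^ i := by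
    rw [sum_range_add, mul_sum]
    simp only [pow_add]
  have hdiff : ∀ U ∈ flats (finrank F W + 1) W Z,
      (secCard S U : ℤ) - secCard S W = q ^ finrank F W := fun U hU => by
    rw [secCard_of_forall_mem hS, secCard_of_forall_mem hS, (mem_flats.mp hU).1, sum_range_succ]
    push_cast
    ring
  rw [sum_congr rfl hdiff, sum_const, secCard_of_forall_mem hS, secCard_of_forall_mem hS, hZ,
    hgeom, nsmul_eq_mul] at hsum
  have hq : 0 < q ^ finrank F W := Nat.pow_pos Fintype.card_pos
  zify
  refine mul_left_cancel₀ (mod_cast hq.ne' : (q ^ finrank F W : ℤ) ≠ 0) ?_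
  push_cast at hsum
  linear_combination hsum

theorem card_lines_through_point {m : ℕ} (hx : x.submodule ≤ Z) (hZ : finrank F Z = 1 + m) :
    #(flats 2 x.submodule Z) = ∑ i ∈ range m, q ^ i := by
  simpa only [x.finrank_submodule] using card_flats_succ hx (by rw [hZ, x.finrank_submodule])

theorem card_lines_through_point_plane (hx : x.submodule ≤ Z) (hZ : finrank F Z = 3) :
    #(flats 2 x.submodule Z) = q + 1 := by
  rw [card_lines_through_point hx (m := 2) hZ, geom_sum_two]

variable (hV : finrank F V = 4)
include hV

theorem card_lines_through_point_space (x : ℙ F V) :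
    #(flats 2 x.submodule ⊤) = q ^ 2 + q + 1 := by
  rw [card_lines_through_point le_top (m := 3) (by rw [finrank_top, hV])]
  simp only [sum_range_succ, sum_range_zero]
  ring

theorem card_planes_through_line {l : Submodule F V} (hl : finrank F l = 2) :
    #(flats 3 l ⊤) = q + 1 := by
  rw [← geom_sum_two]
  simpa only [hl] using card_flats_succ (W := l) (m := 2) le_top (by rw [finrank_top, hV, hl])

theorem card_planes_through_point (x : ℙ F V) : #(flats 3 x.submodule ⊤) = q ^ 2 + q + 1 := by
  have hflags : ∑ l ∈ flats 2 x.submodule ⊤, #(flats 3 l ⊤) =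
      ∑ p ∈ flats 3 x.submodule ⊤, #(flats 2 x.submodule p) := by
    have := sum_card_bipartiteAbove_eq_sum_card_bipartiteBelow
      (s := flats 2 x.submodule ⊤) (t := flats 3 x.submodule ⊤) (· ≤ ·)
    convert this using 3 with l hl
    · ext p
      have hxl := (mem_flats.mp hl).2.1
      simp only [mem_flats, bipartiteAbove, mem_filter]
      exact ⟨fun hp => ⟨⟨hp.1, hxl.trans hp.2.1, hp.2.2⟩, hp.2.1⟩, fun hp => ⟨hp.1.1, hp.2, le_top⟩⟩
    · ext l
      simp only [mem_flats, bipartiteBelow, mem_filter, le_top]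
      tauto
  have hplanes (l) (hl : l ∈ flats 2 x.submodule ⊤) : #(flats 3 l ⊤) = q + 1 :=
    card_planes_through_line hV (mem_flats.mp hl).1
  have hlines (p) (hp : p ∈ flats 3 x.submodule ⊤) : #(flats 2 x.submodule p) = q + 1 :=
    card_lines_through_point_plane (mem_flats.mp hp).2.1 (mem_flats.mp hp).1
  rw [sum_congr rfl hplanes, sum_congr rfl hlines, sum_const, sum_const,
    card_lines_through_point_space hV, smul_eq_mul, smul_eq_mul] at hflags
  exact (Nat.eq_of_mul_eq_mul_right (Nat.succ_pos _) hflags).symm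

end Flats

section Tangents

variable {F V : Type*} [Field F] [AddCommGroup V] [Module F V] [Finite V]
  {K : Finset (ℙ F V)} {W Z l : Submodule F V} {x y : ℙ F V}

local notation "q" => Fintype.card F

/-- The lines of `Z` through `x` that are tangent to `K`, i.e. contain exactly one point of `K`;
that point need not be `x`. -/
noncomputable def tangents (K : Finset (ℙ F V)) (x : ℙ F V) (Z : Submodule F V) :
    Finset (Submodule F V) :=
  {l ∈ flats 2 x.submodule Z | secCard K l = 1}

theorem mem_tangents : l ∈ tangents K x Z ↔
    (finrank F l = 2 ∧ x.submodule ≤ l ∧ l ≤ Z) ∧ secCard K l = 1 := by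
  rw [tangents, mem_filter, mem_flats]

variable (hcap : ∀ l : Submodule F V, finrank F l = 2 → secCard K l ≤ 2) (hx : x ∈ K)
include hcap hx

theorem not_submodule_le_sup_of_cap {z : ℙ F V} (hy : y ∈ K) (hz : z ∈ K)
    (hxy : x ≠ y) (hxz : x ≠ z) (hyz : y ≠ z) : ¬ z.submodule ≤ x.submodule ⊔ y.submodule :=
  fun hle => by
    have hthree : #{x, y, z} = 3 := card_eq_three.mpr ⟨x, y, z, hxy, hxz, hyz, rfl⟩
    have hsub : {x, y, z} ⊆ {w ∈ K | w.submodule ≤ x.submodule ⊔ y.submodule} := by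
      simp [insert_subset_iff, hx, hy, hz, hle]
    have hle3 : 3 ≤ secCard K (x.submodule ⊔ y.submodule) := hthree ▸ card_le_card hsub
    exact absurd (hcap _ (finrank_submodule_sup_submodule hxy)) (by omega)

theorem secCard_sup_eq_two (hy : y ∈ K) (hxy : x ≠ y) :
    secCard K (x.submodule ⊔ y.submodule) = 2 :=
  (hcap _ (finrank_submodule_sup_submodule hxy)).antisymm <| one_lt_card.mpr
    ⟨x, mem_filter.mpr ⟨hx, le_sup_left⟩, y, mem_filter.mpr ⟨hy, le_sup_right⟩, hxy⟩

theorem card_tangents_add_secCard (hxZ : x.submodule ≤ Z) :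
    #(tangents K x Z) + secCard K Z = #(flats 2 x.submodule Z) + 1 := by
  have hsum := sum_flats_sub K hxZ
  rw [x.finrank_submodule, secCard_submodule, if_pos hx] at hsum
  have hone : ∀ l ∈ flats 2 x.submodule Z, (secCard K l : ℤ) - (1 : ℕ) =
      1 - if secCard K l = 1 then 1 else 0 := fun l hl => by
    obtain ⟨hl2, hxl, -⟩ := mem_flats.mp hl
    have := hcap l hl2
    have := secCard_pos hx hxl
    split_ifs <;> omega
  rw [sum_congr rfl hone, sum_sub_distrib, sum_boole, sum_const, nsmul_eq_mul, mul_one] at hsum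
  rw [tangents]
  omega

variable [Fintype F]

theorem card_tangents_add_secCard_plane (hZ : finrank F Z = 3) (hxZ : x.submodule ≤ Z) :
    #(tangents K x Z) + secCard K Z = q + 2 := by
  rw [card_tangents_add_secCard hcap hx hxZ, card_lines_through_point_plane hxZ hZ]

theorem card_tangents_add_card (hV : finrank F V = 4) :
    #(tangents K x ⊤) + #K = q ^ 2 + q + 2 := by
  rw [← secCard_top K, card_tangents_add_secCard hcap hx le_top, card_lines_through_point_space hV]

end Tangents

section Determinant

variable {F : Type*} [Field F]

/-- The determinant of three vectors of `F³`: it vanishes iff the projective points they represent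
are collinear. -/
def det3 (u v w : Fin 3 → F) : F := (Matrix.of ![u, v, w]).det

theorem det3_def (u v w : Fin 3 → F) : det3 u v w =
    u 0 * (v 1 * w 2 - v 2 * w 1) - u 1 * (v 0 * w 2 - v 2 * w 0) +
      u 2 * (v 0 * w 1 - v 1 * w 0) := by
  simp only [det3, Matrix.det_fin_three, Matrix.of_apply, Matrix.cons_val]
  ring

theorem det3_self (u v : Fin 3 → F) : det3 u v v = 0 := by
  rw [det3_def]; ring

theorem det3_swap (u v w : Fin 3 → F) : det3 u v w = -det3 u w v := by
  rw [det3_def, det3_def]; ring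

theorem det3_swap_left (u v w : Fin 3 → F) : det3 u v w = -det3 v u w := by
  rw [det3_def, det3_def]; ring

theorem det3_reverse [CharP F 2] (u v w : Fin 3 → F) : det3 u v w = det3 w v u := by
  rw [← CharTwo.neg_eq (det3 w v u), det3_def, det3_def]; ring

theorem det3_smul_eq (u v w y : Fin 3 → F) :
    det3 u v w • y = det3 y v w • u + det3 u y w • v + det3 u v y • w := by
  ext i
  simp only [Pi.smul_apply, Pi.add_apply, smul_eq_mul, det3_def]
  fin_cases i <;> simp only [Fin.zero_eta, Fin.mk_one, Fin.reduceFinMk] <;> ring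

theorem det3_mul_apply {g : Dual F (Fin 3 → F)} {u : Fin 3 → F} (hg : g u = 0)
    (v w y : Fin 3 → F) :
    det3 u v w * g y = det3 u y w * g v + det3 u v y * g w := by
  simpa only [map_add, map_smul, smul_eq_mul, hg, mul_zero, zero_add] using
    congrArg g (det3_smul_eq u v w y)

/-- The linear form `det3 u v`, whose kernel is the line spanned by `u` and `v`. -/
def det3Form (u v : Fin 3 → F) : Dual F (Fin 3 → F) where
  toFun := det3 u v
  map_add' w y := by simp only [det3_def, Pi.add_apply]; ring
  map_smul' c w := by simp only [det3_def, Pi.smul_apply, smul_eq_mul, RingHom.id_apply]; ring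

theorem eq_smul_of_apply_mul_apply_eq {g h : Dual F (Fin 3 → F)} {u v w : Fin 3 → F}
    (huvw : det3 u v w ≠ 0) (hg : g u = 0) (hh : h u = 0) (hw : h w ≠ 0)
    (hgh : g v * h w = h v * g w) : g = (g w / h w) • h := by
  refine LinearMap.ext fun y => mul_left_cancel₀ huvw ?_
  rw [LinearMap.smul_apply, smul_eq_mul, mul_left_comm, det3_mul_apply hg, det3_mul_apply hh]
  field_simp
  linear_combination det3 u y w * hgh

end Determinant

section Interpolation

variable {F α ι : Type*} [Field F] [DecidableEq α] {p : Fin 3 → F} {v : α → Fin 3 → F}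
  {s : Finset α}

theorem sum_mul_det3_div_prod_det3 (hs : ∀ b ∈ s, ∀ c ∈ s, b ≠ c → det3 p (v b) (v c) ≠ 0)
    (g : α → F) {z : α} (hz : z ∈ s) :
    ∑ b ∈ s, g b * det3 p (v z) (v b) / ∏ c ∈ s.erase b, det3 p (v c) (v b) =
      ∑ b ∈ s.erase z, g b / ∏ c ∈ (s.erase z).erase b, det3 p (v c) (v b) := by
  rw [← add_sum_erase _ _ hz, det3_self, mul_zero, zero_div, zero_add]
  refine sum_congr rfl fun b hb => ?_
  obtain ⟨hbz, hbs⟩ := mem_erase.mp hb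
  rw [← mul_prod_erase _ _ (mem_erase.mpr ⟨hbz.symm, hz⟩), erase_right_comm, mul_comm,
    mul_div_mul_left _ _ (hs z hz b hbs hbz.symm)]

-- A product of `n` linear forms vanishing at `p` is a binary form of degree `n` on the quotient by
-- `p`; this is the linear relation satisfied by its values at `n + 2` points.
theorem sum_prod_div_prod_det3_eq_zero {f : ι → Dual F (Fin 3 → F)} {I : Finset ι}
    (hf : ∀ i ∈ I, f i p = 0) (hcard : #s = #I + 2)
    (hs : ∀ b ∈ s, ∀ c ∈ s, b ≠ c → det3 p (v b) (v c) ≠ 0) :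
    ∑ b ∈ s, (∏ i ∈ I, f i (v b)) / ∏ c ∈ s.erase b, det3 p (v c) (v b) = 0 := by
  induction I using Finset.induction_on generalizing s with
  | empty =>
    obtain ⟨z, w, hzw, rfl⟩ := card_eq_two.mp hcard
    rw [sum_pair hzw, erase_insert (by simpa using hzw), pair_comm,
      erase_insert (by simpa using hzw.symm)]
    simp only [prod_empty, prod_singleton]
    rw [det3_swap p (v w), div_neg, neg_add_cancel]
  | insert i I hi ih =>
    rw [card_insert_of_notMem hi] at hcard
    obtain ⟨z, hz, w, hw, hzw⟩ := one_lt_card.mp (show 1 < #s by omega)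
    have hdrop {y : α} (hy : y ∈ s) : ∑ b ∈ s, (∏ j ∈ I, f j (v b)) * det3 p (v y) (v b) /
        ∏ c ∈ s.erase b, det3 p (v c) (v b) = 0 := by
      rw [sum_mul_det3_div_prod_det3 hs _ hy]
      exact ih (fun j hj => hf j (mem_insert_of_mem hj))
        (by rw [card_erase_of_mem hy, hcard]; rfl)
        fun b hb c hc => hs b (mem_of_mem_erase hb) c (mem_of_mem_erase hc)
    have hsplit (b : α) : det3 p (v z) (v w) * ∏ j ∈ insert i I, f j (v b) =
        f i (v w) * ((∏ j ∈ I, f j (v b)) * det3 p (v z) (v b)) -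
          f i (v z) * ((∏ j ∈ I, f j (v b)) * det3 p (v w) (v b)) := by
      rw [prod_insert hi, det3_swap p (v w) (v b)]
      linear_combination (∏ j ∈ I, f j (v b)) *
        det3_mul_apply (hf i (mem_insert_self i I)) (v z) (v w) (v b)
    refine (mul_eq_zero.mp ?_).resolve_left (hs z hz w hw hzw)
    simp only [mul_sum, ← mul_div_assoc, hsplit, sub_div, sum_sub_distrib]
    simp only [mul_div_assoc (f i _), ← mul_sum, hdrop hz, hdrop hw, mul_zero, sub_zero]

end Interpolation

section Segre

theorem sum_sum_erase_eq_zero_of_symm {R α : Type*} [Ring R] [CharP R 2] {B : Finset α}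
    {H : α → α → R} (hH : ∀ a ∈ B, ∀ b ∈ B, a ≠ b → H a b = H b a) :
    ∑ a ∈ B, ∑ b ∈ B.erase a, H a b = 0 := by
  have hmem {z : Σ _ : α, α} (hz : z ∈ B.sigma fun a => B.erase a) :
      z.1 ∈ B ∧ z.2 ∈ B ∧ z.2 ≠ z.1 := by
    simpa [and_comm] using hz
  rw [sum_sigma']
  refine sum_involution (fun z _ => ⟨z.2, z.1⟩) (fun z hz => ?_) (fun z hz _ h => ?_)
    (fun z hz => ?_) fun z _ => rfl
  · obtain ⟨h₁, h₂, hne⟩ := hmem hz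
    rw [hH _ h₁ _ h₂ hne.symm, CharTwo.add_self_eq_zero]
  · exact (hmem hz).2.2 (congrArg Sigma.fst h)
  · obtain ⟨h₁, h₂, hne⟩ := hmem hz
    simp [h₁, h₂, hne.symm]

variable {F : Type*} [Field F]

variable {α ι : Type*} {A B : Finset α} {v : α → Fin 3 → F} {T : α → Finset ι}
  {f : ι → Dual F (Fin 3 → F)} {a b c : α}

/-- The value at the point `x` of the product of the tangents at `a`, Segre's tangent function. -/
def tangentProd (T : α → Finset ι) (f : ι → Dual F (Fin 3 → F)) (a : α)
    (x : Fin 3 → F) : F := ∏ i ∈ T a, f i x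

/-- Equations of the lines through `a` that meet the arc: the tangents at `a` on the left, the
lines joining `a` to another point of the arc on the right. -/
def lineForm (v : α → Fin 3 → F) (f : ι → Dual F (Fin 3 → F)) (a : α) :
    ι ⊕ α → Dual F (Fin 3 → F) :=
  Sum.elim f fun x => det3Form (v a) (v x)

theorem prod_disjSum_lineForm (s : Finset α) (y : Fin 3 → F) :
    ∏ i ∈ (T a).disjSum s, lineForm v f a i y =
      tangentProd T f a y * ∏ x ∈ s, det3 (v a) (v x) y := by
  rw [prod_disjSum]
  rfl

variable [Fintype F]

local notation "q" => Fintype.card F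

theorem prod_eq_neg_one_of_injOn {κ : Type*} {s : Finset κ} {g : κ → F} (hg : Set.InjOn g s)
    (h0 : ∀ i ∈ s, g i ≠ 0) (hs : #s + 1 = q) : ∏ i ∈ s, g i = -1 := by
  have himage : s.image g = univ.image (Units.val : Fˣ → F) := by
    refine eq_of_subset_of_card_le (fun y hy => ?_) ?_
    · obtain ⟨i, hi, rfl⟩ := mem_image.mp hy
      exact mem_image.mpr ⟨Units.mk0 _ (h0 i hi), mem_univ _, rfl⟩
    · rw [card_image_of_injective _ Units.val_injective, card_image_of_injOn hg, card_univ,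
        Fintype.card_units]
      omega
  calc ∏ i ∈ s, g i = ∏ y ∈ s.image g, y := (prod_image (f := id) hg).symm
    _ = ∏ u : Fˣ, (u : F) := by rw [himage, prod_image Units.val_injective.injOn]
    _ = ((∏ u : Fˣ, u : Fˣ) : F) := (map_prod (Units.coeHom F) _ _).symm
    _ = -1 := by rw [FiniteField.prod_univ_units_id_eq_neg_one, Units.val_neg, Units.val_one]

/-- `A` is an arc of the projective plane, in the coordinates `v`, and for `a ∈ A` the forms `f i`
with `i ∈ T a` are equations of all the tangents of `A` at `a`. -/
structure IsTangentSystem (A : Finset α) (v : α → Fin 3 → F) (T : α → Finset ι)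
    (f : ι → Dual F (Fin 3 → F)) : Prop where
  det3_ne_zero : ∀ a ∈ A, ∀ b ∈ A, ∀ c ∈ A, a ≠ b → a ≠ c → b ≠ c → det3 (v a) (v b) (v c) ≠ 0
  apply_eq_zero : ∀ a ∈ A, ∀ i ∈ T a, f i (v a) = 0
  apply_ne_zero : ∀ a ∈ A, ∀ i ∈ T a, ∀ b ∈ A, b ≠ a → f i (v b) ≠ 0
  eq_of_eq_smul : ∀ a ∈ A, ∀ i ∈ T a, ∀ j ∈ T a, ∀ c : F, f i = c • f j → i = j
  card_add_card : ∀ a ∈ A, #(T a) + #A = q + 2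

namespace IsTangentSystem

variable (hA : IsTangentSystem A v T f)
include hA

theorem tangentProd_ne_zero (ha : a ∈ A) (hb : b ∈ A) (hab : a ≠ b) :
    tangentProd T f a (v b) ≠ 0 :=
  prod_ne_zero_iff.mpr fun i hi => hA.apply_ne_zero a ha i hi b hb hab.symm

theorem lineForm_self (ha : a ∈ A) {s : Finset α} {i : ι ⊕ α} (hi : i ∈ (T a).disjSum s) :
    lineForm v f a i (v a) = 0 := by
  rcases mem_disjSum.mp hi with ⟨k, hk, rfl⟩ | ⟨x, -, rfl⟩
  · exact hA.apply_eq_zero a ha k hk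
  · change det3 (v a) (v x) (v a) = 0
    rw [det3_def]
    ring

theorem lineForm_ne_zero (ha : a ∈ A) (hb : b ∈ A) (hab : a ≠ b) {i : ι ⊕ α}
    (hi : i ∈ (T a).disjSum (A \ {a, b})) : lineForm v f a i (v b) ≠ 0 := by
  rcases mem_disjSum.mp hi with ⟨k, hk, rfl⟩ | ⟨x, hx, rfl⟩
  · exact hA.apply_ne_zero a ha k hk b hb hab.symm
  · obtain ⟨hxA, hxa, hxb⟩ : x ∈ A ∧ x ≠ a ∧ x ≠ b := by simpa using hx
    exact hA.det3_ne_zero a ha x hxA b hb hxa.symm hab hxb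

theorem eq_of_lineForm_eq_smul (ha : a ∈ A) {i j : ι ⊕ α} (hi : i ∈ (T a).disjSum (A \ {a}))
    (hj : j ∈ (T a).disjSum (A \ {a})) {k : F} (hk : k ≠ 0)
    (hij : lineForm v f a i = k • lineForm v f a j) : i = j := by
  have hpoint {x : α} (hx : x ∈ A \ {a}) : x ∈ A ∧ x ≠ a := by simpa using hx
  rcases mem_disjSum.mp hi with ⟨i', hi', rfl⟩ | ⟨x, hx, rfl⟩ <;>
    rcases mem_disjSum.mp hj with ⟨j', hj', rfl⟩ | ⟨y, hy, rfl⟩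
  · exact congrArg _ (hA.eq_of_eq_smul a ha i' hi' j' hj' k hij)
  · refine absurd ?_ (hA.apply_ne_zero a ha i' hi' y (hpoint hy).1 (hpoint hy).2)
    have hval : f i' (v y) = k * det3 (v a) (v y) (v y) := LinearMap.congr_fun hij (v y)
    rw [hval, det3_self, mul_zero]
  · have hval : det3 (v a) (v x) (v x) = k * f j' (v x) := LinearMap.congr_fun hij (v x)
    rw [det3_self] at hval
    exact absurd ((mul_eq_zero.mp hval.symm).resolve_left hk)
      (hA.apply_ne_zero a ha j' hj' x (hpoint hx).1 (hpoint hx).2)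
  · have hval : det3 (v a) (v x) (v y) = k * det3 (v a) (v y) (v y) :=
      LinearMap.congr_fun hij (v y)
    rw [det3_self, mul_zero] at hval
    exact congrArg _ <| by_contra fun hxy => hA.det3_ne_zero a ha x (hpoint hx).1 y (hpoint hy).1
      (hpoint hx).2.symm (hpoint hy).2.symm hxy hval

-- Together with `ab` and `ac`, the lines occurring here are all the lines through `a`, so their
-- slopes are all the nonzero elements of the field.
theorem tangentProd_mul_prod_det3 (ha : a ∈ A) (hb : b ∈ A) (hc : c ∈ A) (hab : a ≠ b)
    (hac : a ≠ c) (hbc : b ≠ c) :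
    tangentProd T f a (v b) * ∏ x ∈ A \ {a, b, c}, det3 (v a) (v x) (v b) =
      -(tangentProd T f a (v c) * ∏ x ∈ A \ {a, b, c}, det3 (v a) (v x) (v c)) := by
  set s : Finset (ι ⊕ α) := (T a).disjSum (A \ {a, b, c}) with hs
  have hsub {t : Finset α} (ht : t ⊆ {a, b, c}) : s ⊆ (T a).disjSum (A \ t) :=
    disjSum_mono le_rfl (sdiff_subset_sdiff le_rfl ht)
  have hne_b (i) (hi : i ∈ s) := hA.lineForm_ne_zero ha hb hab (hsub (by simp [subset_iff]) hi)
  have hne_c (i) (hi : i ∈ s) := hA.lineForm_ne_zero ha hc hac (hsub (by simp [subset_iff]) hi)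
  have hinj : Set.InjOn (fun i => lineForm v f a i (v b) / lineForm v f a i (v c)) s :=
    fun i hi j hj hij => by
      refine hA.eq_of_lineForm_eq_smul ha (hsub (by simp) hi) (hsub (by simp) hj)
        (div_ne_zero (hne_c i hi) (hne_c j hj)) ?_
      exact eq_smul_of_apply_mul_apply_eq (hA.det3_ne_zero a ha b hb c hc hab hac hbc)
        (hA.lineForm_self ha hi) (hA.lineForm_self ha hj) (hne_c j hj)
        ((div_eq_div_iff (hne_c i hi) (hne_c j hj)).mp hij)
  have hcard : #s + 1 = q := by
    have hthree : #{a, b, c} = 3 := card_eq_three.mpr ⟨a, b, c, hab, hac, hbc, rfl⟩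
    have habc : {a, b, c} ⊆ A := by simp [insert_subset_iff, ha, hb, hc]
    have := card_sdiff_add_card_eq_card habc
    have := hA.card_add_card a ha
    rw [hs, card_disjSum]
    omega
  have hslopes := prod_eq_neg_one_of_injOn hinj
    (fun i hi => div_ne_zero (hne_b i hi) (hne_c i hi)) hcard
  rwa [prod_div_distrib, div_eq_iff (prod_ne_zero_iff.mpr hne_c), hs, prod_disjSum_lineForm,
    prod_disjSum_lineForm, neg_one_mul] at hslopes

theorem segre_tangentProd [CharP F 2] (ha : a ∈ A) (hb : b ∈ A) (hc : c ∈ A) (hab : a ≠ b)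
    (hac : a ≠ c) (hbc : b ≠ c) :
    tangentProd T f a (v b) * tangentProd T f b (v c) * tangentProd T f c (v a) =
      tangentProd T f a (v c) * tangentProd T f b (v a) * tangentProd T f c (v b) := by
  let N (x y : α) : F := ∏ z ∈ A \ {a, b, c}, det3 (v x) (v z) (v y)
  have hN (x y : α) : N x y = N y x := prod_congr rfl fun z _ => det3_reverse _ _ _
  have hN0 {x y : α} (hx : x ∈ ({a, b, c} : Finset α)) (hy : y ∈ ({a, b, c} : Finset α))
      (hxA : x ∈ A) (hyA : y ∈ A) (hxy : x ≠ y) : N x y ≠ 0 :=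
    prod_ne_zero_iff.mpr fun z hz => by
      obtain ⟨hzA, hz⟩ := mem_sdiff.mp hz
      exact hA.det3_ne_zero x hxA z hzA y hyA (fun h => hz (h ▸ hx)) hxy fun h => hz (h ▸ hy)
  have hab' : N a b ≠ 0 := hN0 (by simp) (by simp) ha hb hab
  have hac' : N a c ≠ 0 := hN0 (by simp) (by simp) ha hc hac
  have hbc' : N b c ≠ 0 := hN0 (by simp) (by simp) hb hc hbc
  have eqa : tangentProd T f a (v b) * N a b = tangentProd T f a (v c) * N a c := by
    simpa only [CharTwo.neg_eq] using hA.tangentProd_mul_prod_det3 ha hb hc hab hac hbc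
  have eqb : tangentProd T f b (v c) * N b c = tangentProd T f b (v a) * N a b := by
    rw [hN a b]
    simpa only [CharTwo.neg_eq, insert_comm b, pair_comm c] using
      hA.tangentProd_mul_prod_det3 hb hc ha hbc hab.symm hac.symm
  have eqc : tangentProd T f c (v a) * N a c = tangentProd T f c (v b) * N b c := by
    rw [hN a c, hN b c]
    simpa only [CharTwo.neg_eq, insert_comm c, pair_comm c] using
      hA.tangentProd_mul_prod_det3 hc ha hb hac.symm hbc.symm hab
  refine mul_right_cancel₀ (mul_ne_zero (mul_ne_zero hab' hbc') hac') ?_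
  linear_combination tangentProd T f b (v c) * N b c * tangentProd T f c (v a) * N a c * eqa +
    tangentProd T f a (v c) * N a c * tangentProd T f c (v a) * N a c * eqb +
    tangentProd T f a (v c) * N a c * tangentProd T f b (v a) * N a b * eqc

theorem exists_scaling [CharP F 2] : ∃ k : α → F, (∀ a ∈ A, k a ≠ 0) ∧ ∀ a ∈ A, ∀ b ∈ A, a ≠ b →
    k a * tangentProd T f a (v b) = k b * tangentProd T f b (v a) := by
  obtain rfl | ⟨p, hp⟩ := A.eq_empty_or_nonempty
  · simp
  have hne {a b : α} (ha : a ∈ A) (hb : b ∈ A) (hab : a ≠ b) := hA.tangentProd_ne_zero ha hb hab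
  refine ⟨fun a => if a = p then 1 else tangentProd T f p (v a) / tangentProd T f a (v p),
    fun a ha => ?_, fun a ha b hb hab => ?_⟩
  · dsimp only
    split_ifs with hap
    · exact one_ne_zero
    · exact div_ne_zero (hne hp ha (Ne.symm hap)) (hne ha hp hap)
  · dsimp only
    split_ifs with hap hbp hbp
    · exact absurd (hap.trans hbp.symm) hab
    · rw [one_mul, hap, div_mul_cancel₀ _ (hne hb hp hbp)]
    · rw [one_mul, hbp, div_mul_cancel₀ _ (hne ha hp hap)]
    · have := hA.segre_tangentProd hp ha hb (Ne.symm hap) (Ne.symm hbp) hab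
      field_simp [hne ha hp hap, hne hb hp hbp]
      linear_combination this

-- The interpolation relation at `a`, for the points of `B` other than `a` and the point `x`.
theorem tangentProd_div_prod_add_sum_eq_zero (hBA : B ⊆ A) (hB : #B + #A = q + 4)
    {x : Fin 3 → F} (hx : ∀ b ∈ B, ∀ c ∈ B, b ≠ c → det3 (v b) (v c) x ≠ 0) (ha : a ∈ B) :
    tangentProd T f a x / ∏ c ∈ B.erase a, det3 (v a) (v c) x +
      ∑ b ∈ B.erase a, tangentProd T f a (v b) /
        (det3 (v a) x (v b) * ∏ c ∈ (B.erase a).erase b, det3 (v a) (v c) (v b)) = 0 := by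
  let w (y : Option α) : Fin 3 → F := y.elim x v
  have hcard : #(insertNone (B.erase a)) = #(T a) + 2 := by
    have := hA.card_add_card a (hBA ha)
    have := card_erase_add_one ha
    rw [card_insertNone]
    omega
  have hw : ∀ y ∈ insertNone (B.erase a), ∀ z ∈ insertNone (B.erase a), y ≠ z →
      det3 (v a) (w y) (w z) ≠ 0 := by
    have hB {b : α} (hb : some b ∈ insertNone (B.erase a)) : b ≠ a ∧ b ∈ B := by simpa using hb
    rintro (_ | b) hb (_ | c) hc hbc
    · exact absurd rfl hbc
    · rw [det3_swap, neg_ne_zero]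
      exact hx a ha c (hB hc).2 (hB hc).1.symm
    · exact hx a ha b (hB hb).2 (hB hb).1.symm
    · exact hA.det3_ne_zero a (hBA ha) b (hBA (hB hb).2) c (hBA (hB hc).2) (hB hb).1.symm
        (hB hc).1.symm fun h => hbc (congrArg some h)
  have hrel := sum_prod_div_prod_det3_eq_zero (hA.apply_eq_zero a (hBA ha)) hcard hw
  have herase_none : (insertNone (B.erase a)).erase none = (B.erase a).map .some := by
    ext (_ | b) <;> simp
  have herase_some (b : α) :
      (insertNone (B.erase a)).erase (some b) = insertNone ((B.erase a).erase b) := by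
    ext (_ | c) <;> simp
  rw [sum_insertNone, herase_none, prod_map] at hrel
  simp only [herase_some, prod_insertNone] at hrel
  exact hrel

theorem sum_scaled_tangentProd_eq_zero [CharP F 2] {k : α → F}
    (hk : ∀ a ∈ A, ∀ b ∈ A, a ≠ b → k a * tangentProd T f a (v b) = k b * tangentProd T f b (v a))
    (hBA : B ⊆ A) (hB : #B + #A = q + 4) {x : Fin 3 → F}
    (hx : ∀ b ∈ B, ∀ c ∈ B, b ≠ c → det3 (v b) (v c) x ≠ 0) :
    ∑ a ∈ B, k a * (tangentProd T f a x / ∏ c ∈ B.erase a, det3 (v a) (v c) x) = 0 := by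
  let H (a b : α) : F := k a * (tangentProd T f a (v b) /
    (det3 (v a) x (v b) * ∏ c ∈ (B.erase a).erase b, det3 (v a) (v c) (v b)))
  have hH : ∀ a ∈ B, ∀ b ∈ B, a ≠ b → H a b = H b a := fun a ha b hb hab => by
    simp only [H, ← mul_div_assoc, hk a (hBA ha) b (hBA hb) hab, det3_reverse (v a),
      erase_right_comm (a := a)]
  calc ∑ a ∈ B, k a * (tangentProd T f a x / ∏ c ∈ B.erase a, det3 (v a) (v c) x)
    _ = ∑ a ∈ B, k a * (tangentProd T f a x / ∏ c ∈ B.erase a, det3 (v a) (v c) x) +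
          ∑ a ∈ B, ∑ b ∈ B.erase a, H a b := by
      rw [sum_sum_erase_eq_zero_of_symm hH, add_zero]
    _ = 0 := by
      rw [← sum_add_distrib]
      refine sum_eq_zero fun a ha => ?_
      rw [← mul_sum, ← mul_add, hA.tangentProd_div_prod_add_sum_eq_zero hBA hB hx ha, mul_zero]

theorem det3_ne_zero_of_tangent (ha : a ∈ A) (hb : b ∈ A) (hab : a ≠ b) {x y : Fin 3 → F}
    (hy : det3 (v a) y x ≠ 0) {i : ι} (hi : i ∈ T a) (hix : f i x = 0) :
    det3 (v a) (v b) x ≠ 0 := fun h => by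
  have := det3_mul_apply (hA.apply_eq_zero a ha i hi) (v b) x y
  rw [h, hix, zero_mul, mul_zero, add_zero] at this
  exact mul_ne_zero hy (hA.apply_ne_zero a ha i hi b hb hab.symm) this.symm

theorem card_tangents_through_add_card_le [CharP F 2] {p : α} {x : Fin 3 → F}
    (hx : ∀ a ∈ A, ∃ y, det3 (v a) y x ≠ 0) (hp : p ∈ A) (hpx : ∀ i ∈ T p, f i x ≠ 0) :
    #{a ∈ A | ∃ i ∈ T a, f i x = 0} + #A ≤ q + 2 := by
  by_contra! hlt
  have hpA := hA.card_add_card p hp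
  obtain ⟨R, hR, hRcard⟩ := exists_subset_card_eq
    (show #(T p) + 1 ≤ #{a ∈ A | ∃ i ∈ T a, f i x = 0} by omega)
  have htangent {a : α} (ha : a ∈ R) : a ∈ A ∧ ∃ i ∈ T a, f i x = 0 := mem_filter.mp (hR ha)
  have hpR : p ∉ R := fun h => by
    obtain ⟨-, i, hi, hix⟩ := htangent h
    exact hpx i hi hix
  have hdet {a b : α} (ha : a ∈ R) (hb : b ∈ A) (hab : a ≠ b) : det3 (v a) (v b) x ≠ 0 := by
    obtain ⟨haA, i, hi, hix⟩ := htangent ha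
    obtain ⟨y, hy⟩ := hx a haA
    exact hA.det3_ne_zero_of_tangent haA hb hab hy hi hix
  have hBA : insert p R ⊆ A := insert_subset hp fun a ha => (htangent ha).1
  have hBx : ∀ b ∈ insert p R, ∀ c ∈ insert p R, b ≠ c → det3 (v b) (v c) x ≠ 0 := by
    intro b hb c hc hbc
    rcases mem_insert.mp hb with rfl | hbR
    · have hcR := mem_of_mem_insert_of_ne hc hbc.symm
      rw [det3_swap_left, neg_ne_zero]
      exact hdet hcR hp hbc.symm
    · exact hdet hbR (hBA hc) hbc
  obtain ⟨k, hk0, hk⟩ := hA.exists_scaling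
  have hsum := hA.sum_scaled_tangentProd_eq_zero hk hBA
    (by rw [card_insert_of_notMem hpR]; omega) hBx
  have hR0 : ∀ a ∈ R, k a * (tangentProd T f a x /
      ∏ c ∈ (insert p R).erase a, det3 (v a) (v c) x) = 0 := fun a ha => by
    obtain ⟨-, i, hi, hix⟩ := htangent ha
    rw [tangentProd, prod_eq_zero hi hix, zero_div, mul_zero]
  rw [sum_insert hpR, sum_eq_zero hR0, add_zero, erase_insert hpR] at hsum
  refine mul_ne_zero (hk0 p hp) (div_ne_zero (prod_ne_zero_iff.mpr hpx) ?_) hsum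
  exact prod_ne_zero_iff.mpr fun c hc =>
    hBx p (mem_insert_self p R) c (mem_insert_of_mem hc) fun h => hpR (h ▸ hc)

end IsTangentSystem

end Segre

section PlaneCoordinates

variable {F V : Type*} [Field F] [AddCommGroup V] [Module F V] {Z l W : Submodule F V}
  {x y z : ℙ F V}

theorem exists_point_le_not_le (hWZ : finrank F W < finrank F Z) [FiniteDimensional F W] :
    ∃ y : ℙ F V, y.submodule ≤ Z ∧ ¬ y.submodule ≤ W := by
  have hZW : ¬ Z ≤ W := fun h => hWZ.not_ge (Submodule.finrank_mono h)
  obtain ⟨y, hyZ, hyW⟩ := SetLike.not_le_iff_exists.mp hZW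
  refine ⟨.mk F y fun h => hyW (h ▸ W.zero_mem), ?_⟩
  simp only [Projectivization.submodule_mk, Submodule.span_singleton_le_iff_mem]
  exact ⟨hyZ, hyW⟩

theorem exists_injOn_coordinates (hZ : finrank F Z = 3) :
    ∃ φ : V →ₗ[F] Fin 3 → F, Set.InjOn φ Z := by
  have : FiniteDimensional F Z := .of_finrank_pos (by omega)
  let e : Z ≃ₗ[F] Fin 3 → F := .ofFinrankEq _ _ (by simpa using hZ)
  obtain ⟨φ, hφ⟩ := e.toLinearMap.exists_extend
  refine ⟨φ, fun a ha b hb hab => ?_⟩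
  have hφe (a : Z) : e a = φ a := (LinearMap.congr_fun hφ a).symm
  have heq : e ⟨a, ha⟩ = e ⟨b, hb⟩ := by rw [hφe, hφe, hab]
  exact congrArg Subtype.val (e.injective heq)

variable {φ : V →ₗ[F] Fin 3 → F} (hφ : Set.InjOn φ Z)
include hφ

theorem exists_line_equation (hl : finrank F l = 2) (hlZ : l ≤ Z) :
    ∃ f : Dual F (Fin 3 → F), ∀ y ∈ Z, f (φ y) = 0 ↔ y ∈ l := by
  have hmap : finrank F (l.map φ) = 2 := by
    rw [← LinearMap.range_domRestrict, LinearMap.finrank_range_of_inj, hl]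
    exact Set.injOn_iff_injective.mp (hφ.mono hlZ)
  have hlt : l.map φ < ⊤ := lt_top_iff_ne_top.mpr fun h => by
    rw [h, finrank_top, finrank_fin_fun] at hmap
    omega
  obtain ⟨f, hf, hle⟩ := Submodule.exists_le_ker_of_lt_top _ hlt
  have hker : finrank F (LinearMap.ker f) + 1 = 3 := by
    rw [Module.Dual.finrank_ker_add_one_of_ne_zero hf, finrank_fin_fun]
  have heq : l.map φ = LinearMap.ker f :=
    Submodule.eq_of_le_of_finrank_eq hle (by omega)
  refine ⟨f, fun y hy => ?_⟩
  rw [← LinearMap.mem_ker, ← heq, Submodule.mem_map]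
  constructor
  · rintro ⟨w, hw, hwy⟩
    exact hφ (hlZ hw) hy hwy ▸ hw
  · exact fun hyl => ⟨y, hyl, rfl⟩

variable [FiniteDimensional F V]

theorem det3_rep_ne_zero (hx : x.submodule ≤ Z) (hy : y.submodule ≤ Z) (hz : z.submodule ≤ Z)
    (hxy : x ≠ y) (hxyz : ¬ z.submodule ≤ x.submodule ⊔ y.submodule) :
    det3 (φ x.rep) (φ y.rep) (φ z.rep) ≠ 0 := by
  have hspan : Submodule.span F (Set.range ![x.rep, y.rep, z.rep]) =
      x.submodule ⊔ y.submodule ⊔ z.submodule := by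
    simp only [Matrix.range_cons, Matrix.range_empty, Set.union_empty, Submodule.span_union,
      Projectivization.submodule_eq, sup_assoc]
  have hind : LinearIndependent F ![x.rep, y.rep, z.rep] := by
    rw [linearIndependent_iff_card_eq_finrank_span, Set.finrank, hspan,
      finrank_sup_submodule hxyz, finrank_submodule_sup_submodule hxy, Fintype.card_fin]
  have hmap : LinearIndependent F (φ ∘ ![x.rep, y.rep, z.rep]) := by
    refine hind.map_injOn φ (hφ.mono ?_)
    rw [hspan]
    exact sup_le (sup_le hx hy) hz
  have hrows : φ ∘ ![x.rep, y.rep, z.rep] =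
      (Matrix.of ![φ x.rep, φ y.rep, φ z.rep]).row := by
    ext i
    fin_cases i <;> rfl
  rw [hrows, Matrix.linearIndependent_rows_iff_isUnit, Matrix.isUnit_iff_isUnit_det] at hmap
  exact hmap.ne_zero

theorem exists_det3_rep_ne_zero (hZ : finrank F Z = 3) (hx : x.submodule ≤ Z)
    (hy : y.submodule ≤ Z) (hxy : x ≠ y) : ∃ w, det3 (φ x.rep) w (φ y.rep) ≠ 0 := by
  obtain ⟨z, hzZ, hz⟩ := exists_point_le_not_le (W := x.submodule ⊔ y.submodule) (Z := Z)
    (by rw [finrank_submodule_sup_submodule hxy, hZ]; omega)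
  refine ⟨φ z.rep, ?_⟩
  rw [det3_swap, neg_ne_zero]
  exact det3_rep_ne_zero hφ hx hy hzZ hxy hz

end PlaneCoordinates

section PlanarTangents

variable {F V : Type*} [Field F] [Fintype F] [AddCommGroup V] [Module F V] [Finite V]
  {Z : Submodule F V} {K : Finset (ℙ F V)} {x : ℙ F V}
  (hcap : ∀ l : Submodule F V, finrank F l = 2 → secCard K l ≤ 2)

include hcap

local notation "q" => Fintype.card F

theorem isTangentSystem_tangents (hZ : finrank F Z = 3) {φ : V →ₗ[F] Fin 3 → F}
    (hφ : Set.InjOn φ Z) {f : Submodule F V → Dual F (Fin 3 → F)}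
    (hf : ∀ l : Submodule F V, finrank F l = 2 → l ≤ Z →
      ∀ y ∈ Z, f l (φ y) = 0 ↔ y ∈ l) :
    IsTangentSystem {x ∈ K | x.submodule ≤ Z} (fun x => φ x.rep) (tangents K · Z) f where
  det3_ne_zero a ha b hb c hc hab hac hbc := by
    obtain ⟨haK, haZ⟩ := mem_filter.mp ha
    obtain ⟨hbK, hbZ⟩ := mem_filter.mp hb
    obtain ⟨hcK, hcZ⟩ := mem_filter.mp hc
    exact det3_rep_ne_zero hφ haZ hbZ hcZ hab
      (not_submodule_le_sup_of_cap hcap haK hbK hcK hab hac hbc)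
  apply_eq_zero a _ l hl := by
    obtain ⟨⟨hl2, hal, hlZ⟩, -⟩ := mem_tangents.mp hl
    exact (hf l hl2 hlZ _ (submodule_le_iff_rep_mem.mp (hal.trans hlZ))).mpr
      (submodule_le_iff_rep_mem.mp hal)
  apply_ne_zero a ha l hl b hb hba h0 := by
    obtain ⟨⟨hl2, hal, hlZ⟩, hl1⟩ := mem_tangents.mp hl
    obtain ⟨hbK, hbZ⟩ := mem_filter.mp hb
    rw [hf l hl2 hlZ _ (submodule_le_iff_rep_mem.mp hbZ), ← submodule_le_iff_rep_mem] at h0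
    exact hba (eq_of_secCard_eq_one hl1 hbK (mem_filter.mp ha).1 h0 hal)
  eq_of_eq_smul a _ l hl m hm c hlm := by
    obtain ⟨⟨hl2, -, hlZ⟩, -⟩ := mem_tangents.mp hl
    obtain ⟨⟨hm2, -, hmZ⟩, -⟩ := mem_tangents.mp hm
    refine (Submodule.eq_of_le_of_finrank_eq (fun y hy => ?_) (by rw [hl2, hm2])).symm
    rw [← hf l hl2 hlZ y (hmZ hy), hlm, LinearMap.smul_apply, (hf m hm2 hmZ y (hmZ hy)).mpr hy,
      smul_zero]
  card_add_card a ha := by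
    obtain ⟨haK, haZ⟩ := mem_filter.mp ha
    exact card_tangents_add_secCard_plane hcap haK hZ haZ

theorem card_tangents_add_secCard_le [CharP F 2] (hZ : finrank F Z = 3) (hx : x ∉ K)
    (hxZ : x.submodule ≤ Z) {m : Submodule F V} (hm : m ∈ flats 2 x.submodule Z)
    (hm2 : secCard K m = 2) : #(tangents K x Z) + secCard K Z ≤ q + 2 := by
  obtain ⟨φ, hφ⟩ := exists_injOn_coordinates hZ
  choose! f hf using fun l hl hlZ => exists_line_equation (l := l) hφ hl hlZ
  have hA := isTangentSystem_tangents hcap hZ hφ hf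
  obtain ⟨hmr, hxm, hmZ⟩ := mem_flats.mp hm
  obtain ⟨p, hp⟩ := card_pos.mp (show 0 < secCard K m by omega)
  obtain ⟨hpK, hpm⟩ := mem_filter.mp hp
  have hne {a : ℙ F V} (ha : a ∈ K) : a ≠ x := fun h => hx (h ▸ ha)
  have hincident {a : ℙ F V} {l : Submodule F V} (hl : l ∈ tangents K a Z) :
      f l (φ x.rep) = 0 ↔ x.submodule ≤ l := by
    obtain ⟨⟨hl2, -, hlZ⟩, -⟩ := mem_tangents.mp hl
    rw [hf l hl2 hlZ _ (submodule_le_iff_rep_mem.mp hxZ), submodule_le_iff_rep_mem]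
  have hpx : ∀ l ∈ tangents K p Z, f l (φ x.rep) ≠ 0 := fun l hl h0 => by
    obtain ⟨⟨hl2, hpl, -⟩, hl1⟩ := mem_tangents.mp hl
    have hlm : l = m := by
      rw [← submodule_sup_submodule_eq hl2 (hne hpK) hpl ((hincident hl).mp h0),
        submodule_sup_submodule_eq hmr (hne hpK) hpm hxm]
    rw [hlm] at hl1
    omega
  have hoff : ∀ a ∈ {a ∈ K | a.submodule ≤ Z}, ∃ y, det3 (φ a.rep) y (φ x.rep) ≠ 0 :=
    fun a ha =>
      exists_det3_rep_ne_zero hφ hZ (mem_filter.mp ha).2 hxZ (hne (mem_filter.mp ha).1)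
  have hle := hA.card_tangents_through_add_card_le hoff
    (mem_filter.mpr ⟨hpK, hpm.trans hmZ⟩) hpx
  refine (Nat.add_le_add_right ?_ _).trans hle
  refine card_le_card_of_surjOn (fun a => a.submodule ⊔ x.submodule) fun l hl => ?_
  obtain ⟨⟨hl2, hxl, hlZ⟩, hl1⟩ := mem_tangents.mp (mem_coe.mp hl)
  obtain ⟨a, ha⟩ := card_pos.mp (show 0 < secCard K l by omega)
  obtain ⟨haK, hal⟩ := mem_filter.mp ha
  have hla : l ∈ tangents K a Z := mem_tangents.mpr ⟨⟨hl2, hal, hlZ⟩, hl1⟩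
  exact ⟨a, mem_coe.mpr (mem_filter.mpr ⟨mem_filter.mpr ⟨haK, hal.trans hlZ⟩, l, hla,
    (hincident hla).mpr hxl⟩), submodule_sup_submodule_eq hl2 (hne haK) hal hxl⟩

end PlanarTangents

section SpaceTangents

variable {F V : Type*} [Field F] [AddCommGroup V] [Module F V] [Finite V]
  {K : Finset (ℙ F V)} {x : ℙ F V} {l : Submodule F V}

theorem exists_point_le_of_lines_in_plane {p m : Submodule F V} (hp : finrank F p = 3)
    (hl : finrank F l = 2) (hm : finrank F m = 2) (hlp : l ≤ p) (hmp : m ≤ p) :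
    ∃ z : ℙ F V, z.submodule ≤ l ∧ z.submodule ≤ m := by
  have hsup := Submodule.finrank_mono (sup_le hlp hmp)
  have hinf := Submodule.finrank_sup_add_finrank_inf_eq l m
  obtain ⟨z, hz, -⟩ := exists_point_le_not_le (W := ⊥) (Z := l ⊓ m) (by rw [finrank_bot]; omega)
  exact ⟨z, hz.trans inf_le_left, hz.trans inf_le_right⟩

theorem sum_card_tangents_plane_le (hx : x ∈ K) (hl : l ∈ tangents K x ⊤) {L : Finset (ℙ F V)}
    (hL : ∀ z : ℙ F V, z.submodule ≤ l → z ≠ x → z ∈ L) :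
    ∑ y ∈ K with y.submodule ≤ ⊤ ∧ ¬ y.submodule ≤ l, #(tangents K y (l ⊔ y.submodule)) ≤
      ∑ z ∈ L, #((tangents K z ⊤).erase l) := by
  obtain ⟨⟨hl2, hxl, -⟩, -⟩ := mem_tangents.mp hl
  rw [← card_biUnion]
  · refine (card_le_card (biUnion_subset.mpr fun y hy m hm => ?_)).trans card_biUnion_le
    obtain ⟨hyK, -, hyl⟩ := mem_filter.mp hy
    obtain ⟨⟨hm2, hym, hmp⟩, hm1⟩ := mem_tangents.mp hm
    obtain ⟨z, hzl, hzm⟩ := exists_point_le_of_lines_in_plane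
      (by rw [finrank_sup_submodule hyl, hl2]) hl2 hm2 le_sup_left hmp
    have hzx : z ≠ x := fun hzx =>
      hyl (eq_of_secCard_eq_one hm1 hyK hx hym (hzx ▸ hzm) ▸ hxl)
    exact mem_biUnion.mpr ⟨z, hL z hzl hzx,
      mem_erase.mpr ⟨fun hml => hyl (hml ▸ hym), mem_tangents.mpr ⟨⟨hm2, hzm, le_top⟩, hm1⟩⟩⟩
  · refine fun y hy z hz hyz => disjoint_left.mpr fun m hmy hmz => hyz ?_
    obtain ⟨⟨-, hym, -⟩, hm1⟩ := mem_tangents.mp hmy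
    exact eq_of_secCard_eq_one hm1 (mem_filter.mp hy).1 (mem_filter.mp hz).1 hym
      (mem_tangents.mp hmz).1.2.1

variable [Fintype F]

local notation "q" => Fintype.card F

variable (hcap : ∀ l : Submodule F V, finrank F l = 2 → secCard K l ≤ 2)
include hcap

theorem sum_card_tangents_plane (hl : l ∈ tangents K x ⊤) :
    ∑ y ∈ K with y.submodule ≤ ⊤ ∧ ¬ y.submodule ≤ l, (#(tangents K y (l ⊔ y.submodule)) : ℤ) =
      ∑ p ∈ flats 3 l ⊤, ((secCard K p : ℤ) - 1) * (q + 2 - secCard K p) := by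
  obtain ⟨⟨hl2, -, -⟩, hl1⟩ := mem_tangents.mp hl
  have hsum := sum_flats_sub_mul K (le_top (a := l)) fun p => q + 2 - (secCard K p : ℤ)
  rw [hl2, hl1, Nat.cast_one] at hsum
  rw [hsum]
  refine sum_congr rfl fun y hy => ?_
  obtain ⟨hyK, -, hyl⟩ := mem_filter.mp hy
  have := card_tangents_add_secCard_plane hcap hyK
    (by rw [finrank_sup_submodule hyl, hl2] : finrank F ↥(l ⊔ y.submodule) = 3) le_sup_right
  omega

variable [CharP F 2] (hV : finrank F V = 4)
include hV

theorem card_tangents_add_card_le (hx : x ∉ K) {m : Submodule F V}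
    (hm : m ∈ flats 2 x.submodule ⊤) (hm2 : secCard K m = 2) :
    #(tangents K x ⊤) + #K ≤ q ^ 2 + q + 2 := by
  obtain ⟨hmr, hxm, -⟩ := mem_flats.mp hm
  have hplane : tangents K x ⊤ ⊆ (flats 3 m ⊤).biUnion (tangents K x) := fun l hl => by
    obtain ⟨⟨hl2, hxl, -⟩, hl1⟩ := mem_tangents.mp hl
    obtain ⟨a, ha⟩ := card_pos.mp (show 0 < secCard K l by omega)
    obtain ⟨haK, hal⟩ := mem_filter.mp ha
    have hax : x ≠ a := fun h => hx (h ▸ haK)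
    have hla : x.submodule ⊔ a.submodule = l := submodule_sup_submodule_eq hl2 hax hxl hal
    have ham : ¬ a.submodule ≤ m := fun ham => by
      rw [← hla, submodule_sup_submodule_eq hmr hax hxm ham] at hl1
      omega
    refine mem_biUnion.mpr ⟨m ⊔ a.submodule, mem_flats.mpr ⟨?_, le_sup_left, le_top⟩, ?_⟩
    · rw [finrank_sup_submodule ham, hmr]
    · exact mem_tangents.mpr ⟨⟨hl2, hxl, hla ▸ sup_le_sup_right hxm _⟩, hl1⟩
  have hbound : ∀ p ∈ flats 3 m ⊤,
      (#(tangents K x p) : ℤ) ≤ q - ((secCard K p : ℤ) - secCard K m) := fun p hp => by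
    obtain ⟨hp3, hmp, -⟩ := mem_flats.mp hp
    have := card_tangents_add_secCard_le hcap hp3 hx (hxm.trans hmp)
      (mem_flats.mpr ⟨hmr, hxm, hmp⟩) hm2
    omega
  have hle : (#(tangents K x ⊤) : ℤ) ≤ (q + 1) * q - (#K - 2) := by
    calc (#(tangents K x ⊤) : ℤ) ≤ ∑ p ∈ flats 3 m ⊤, (#(tangents K x p) : ℤ) :=
          mod_cast (card_le_card hplane).trans card_biUnion_le
      _ ≤ ∑ p ∈ flats 3 m ⊤, (q - ((secCard K p : ℤ) - secCard K m)) := sum_le_sum hbound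
      _ = (q + 1) * q - (#K - 2) := by
          have hsum := sum_flats_sub K (le_top (a := m))
          rw [hmr, secCard_top, hm2] at hsum
          rw [sum_sub_distrib, hm2, hsum, sum_const, card_planes_through_line hV hmr]
          simp
  zify
  linarith

variable (hbisecant : ∀ x ∉ K, ∃ m ∈ flats 2 x.submodule ⊤, secCard K m = 2)
include hbisecant

theorem sum_sub_one_mul_le (hx : x ∈ K) (hl : l ∈ tangents K x ⊤) :
    ∑ p ∈ flats 3 l ⊤, ((secCard K p : ℤ) - 1) * (q + 2 - secCard K p) ≤
      q * (q ^ 2 + q + 1 - #K) := by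
  obtain ⟨⟨hl2, hxl, -⟩, hl1⟩ := mem_tangents.mp hl
  obtain ⟨S, hS⟩ : ∃ S : Finset (ℙ F V), ∀ x, x ∈ S :=
    ⟨(Set.toFinite Set.univ).toFinset, by simp⟩
  let L : Finset (ℙ F V) := {z ∈ S | z.submodule ≤ l}.erase x
  have hLcard : #L = q := by
    rw [card_erase_of_mem (mem_filter.mpr ⟨hS x, hxl⟩), ← secCard, secCard_of_forall_mem hS, hl2,
      geom_sum_two, Nat.add_sub_cancel]
  have hL : ∀ z : ℙ F V, z.submodule ≤ l → z ≠ x → z ∈ L := fun z hzl hzx =>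
    mem_erase.mpr ⟨hzx, mem_filter.mpr ⟨hS z, hzl⟩⟩
  have hout : ∀ z ∈ L, (#((tangents K z ⊤).erase l) : ℤ) ≤ q ^ 2 + q + 1 - #K := fun z hz => by
    obtain ⟨hzx, hzS⟩ := mem_erase.mp hz
    have hzl := (mem_filter.mp hzS).2
    have hzK : z ∉ K := fun hzK => hzx (eq_of_secCard_eq_one hl1 hzK hx hzl hxl)
    obtain ⟨m, hm, hm2⟩ := hbisecant z hzK
    have := card_tangents_add_card_le hcap hV hzK hm hm2
    have := card_erase_add_one (mem_tangents.mpr ⟨⟨hl2, hzl, le_top⟩, hl1⟩)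
    zify at *
    linarith
  calc ∑ p ∈ flats 3 l ⊤, ((secCard K p : ℤ) - 1) * (q + 2 - secCard K p)
      = ∑ y ∈ K with y.submodule ≤ ⊤ ∧ ¬ y.submodule ≤ l, (#(tangents K y (l ⊔ y.submodule)) : ℤ) :=
        (sum_card_tangents_plane hcap hl).symm
    _ ≤ ∑ z ∈ L, (#((tangents K z ⊤).erase l) : ℤ) := by
        exact_mod_cast sum_card_tangents_plane_le hx hl hL
    _ ≤ ∑ z ∈ L, ((q : ℤ) ^ 2 + q + 1 - #K) := sum_le_sum hout
    _ = q * (q ^ 2 + q + 1 - #K) := by rw [sum_const, hLcard, nsmul_eq_mul]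

end SpaceTangents

section TangentGeometry

variable {F V : Type*} [Field F] [AddCommGroup V] [Module F V] [Finite V]
  {K : Finset (ℙ F V)} {x : ℙ F V} {l m p p₁ p₂ : Submodule F V} {t : ℕ}

local notation "q" => Fintype.card F

theorem finrank_inf_lt (hlm : finrank F l = finrank F m) (hne : l ≠ m) :
    finrank F ↥(l ⊓ m) < finrank F l :=
  Submodule.finrank_lt_finrank_of_lt <| inf_lt_left.mpr fun hle =>
    hne (Submodule.eq_of_le_of_finrank_eq hle hlm)

/-- The number of planes through `x` that meet `K` in exactly `v` points. -/
noncomputable def planeCount (K : Finset (ℙ F V)) (x : ℙ F V) (v : ℕ) : ℕ :=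
  #{p ∈ flats 3 x.submodule ⊤ | secCard K p = v}

theorem filter_flats_of_submodule_le (hxl : x.submodule ≤ l) :
    {p ∈ flats 3 x.submodule ⊤ | l ≤ p} = flats 3 l ⊤ := by
  ext p
  simp only [mem_filter, mem_flats]
  exact ⟨fun hp => ⟨hp.1.1, hp.2, hp.1.2.2⟩, fun hp => ⟨⟨hp.1, hxl.trans hp.2.1, hp.2.2⟩, hp.2.1⟩⟩

theorem isLinearSpace_tangents (K : Finset (ℙ F V)) (x : ℙ F V) :
    IsLinearSpace (tangents K x ⊤) (flats 3 x.submodule ⊤) (· ≤ ·) := by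
  intro l hl m hm hlm
  obtain ⟨⟨hl2, hxl, -⟩, -⟩ := mem_tangents.mp hl
  obtain ⟨⟨hm2, hxm, -⟩, -⟩ := mem_tangents.mp hm
  have hinf := Submodule.finrank_mono (le_inf hxl hxm)
  have hlt := finrank_inf_lt (hl2.trans hm2.symm) hlm
  have hsup := Submodule.finrank_sup_add_finrank_inf_eq l m
  have hsup3 : finrank F ↥(l ⊔ m) = 3 := by
    rw [x.finrank_submodule] at hinf
    omega
  refine ⟨l ⊔ m, ⟨mem_flats.mpr ⟨hsup3, hxl.trans le_sup_left, le_top⟩, le_sup_left,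
    le_sup_right⟩, fun p ⟨hp, hlp, hmp⟩ => ?_⟩
  exact (Submodule.eq_of_le_of_finrank_eq (sup_le hlp hmp)
    (hsup3.trans (mem_flats.mp hp).1.symm)).symm

theorem card_tangents_of_two_covering_planes (hp₁ : finrank F p₁ = 3) (hp₂ : finrank F p₂ = 3)
    (hne : p₁ ≠ p₂) (hcov : ∀ l ∈ tangents K x ⊤, l ≤ p₁ ∨ l ≤ p₂) :
    #(tangents K x ⊤) + (if p₁ ⊓ p₂ ∈ tangents K x ⊤ then 1 else 0) =
      lineCard (tangents K x ⊤) (· ≤ ·) p₁ + lineCard (tangents K x ⊤) (· ≤ ·) p₂ := by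
  have hlt := finrank_inf_lt (hp₁.trans hp₂.symm) hne
  have hinter : {l ∈ tangents K x ⊤ | l ≤ p₁} ∩ {l ∈ tangents K x ⊤ | l ≤ p₂} =
      {l ∈ tangents K x ⊤ | p₁ ⊓ p₂ = l} := by
    rw [← filter_and]
    refine filter_congr fun l hl => ⟨fun ⟨h₁, h₂⟩ => ?_, ?_⟩
    · exact (Submodule.eq_of_le_of_finrank_le (le_inf h₁ h₂)
        (by rw [(mem_tangents.mp hl).1.1]; omega)).symm
    · rintro rfl
      exact ⟨inf_le_left, inf_le_right⟩
  rw [lineCard, lineCard, ← card_union_add_card_inter, ← filter_or, filter_true_of_mem hcov, hinter,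
    filter_eq]
  split_ifs <;> rfl

variable [Fintype F] (hcap : ∀ l : Submodule F V, finrank F l = 2 → secCard K l ≤ 2)
include hcap

theorem lineCard_tangents_add_secCard (hx : x ∈ K) (hp : p ∈ flats 3 x.submodule ⊤) :
    lineCard (tangents K x ⊤) (· ≤ ·) p + secCard K p = q + 2 := by
  obtain ⟨hp3, hxp, -⟩ := mem_flats.mp hp
  have hfilter : {l ∈ tangents K x ⊤ | l ≤ p} = tangents K x p := by
    ext l
    simp only [mem_filter, mem_tangents]
    have := le_top (a := l)
    tauto
  rw [lineCard, hfilter, card_tangents_add_secCard_plane hcap hx hp3 hxp]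

theorem lineCard_tangents_le (hx : x ∈ K) (hp : p ∈ flats 3 x.submodule ⊤) :
    lineCard (tangents K x ⊤) (· ≤ ·) p ≤ q + 1 := by
  have := lineCard_tangents_add_secCard hcap hx hp
  have := secCard_pos hx (mem_flats.mp hp).2.1
  omega

theorem planeCount_eq_card_lineCard (hx : x ∈ K) {v k : ℕ} (hvk : v + k = q + 2) :
    planeCount K x v =
      #{p ∈ flats 3 x.submodule ⊤ | lineCard (tangents K x ⊤) (· ≤ ·) p = k} := by
  refine congrArg card (filter_congr fun p hp => ?_)
  have := lineCard_tangents_add_secCard hcap hx hp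
  omega

-- Such a plane meets `K` in `x` only, so all its lines through `x` are tangents.
theorem inf_mem_tangents (hV : finrank F V = 4) (hx : x ∈ K) (hp₁ : p₁ ∈ flats 3 x.submodule ⊤)
    (hp₂ : p₂ ∈ flats 3 x.submodule ⊤) (hne : p₁ ≠ p₂)
    (hfull : lineCard (tangents K x ⊤) (· ≤ ·) p₁ = q + 1) : p₁ ⊓ p₂ ∈ tangents K x ⊤ := by
  obtain ⟨hr₁, hx₁, -⟩ := mem_flats.mp hp₁
  obtain ⟨hr₂, hx₂, -⟩ := mem_flats.mp hp₂
  have hlt := finrank_inf_lt (hr₁.trans hr₂.symm) hne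
  have hadd := Submodule.finrank_sup_add_finrank_inf_eq p₁ p₂
  have hsup := Submodule.finrank_le (p₁ ⊔ p₂)
  refine mem_tangents.mpr ⟨⟨by omega, le_inf hx₁ hx₂, le_top⟩, ?_⟩
  have hcard := lineCard_tangents_add_secCard hcap hx hp₁
  have hpos := secCard_pos hx (le_inf hx₁ hx₂)
  have hmono : secCard K (p₁ ⊓ p₂) ≤ secCard K p₁ :=
    card_le_card <| monotone_filter_right _ fun y _ hy => hy.trans inf_le_left
  omega

variable [CharP F 2] (hV : finrank F V = 4)
  (hbisecant : ∀ x ∉ K, ∃ m ∈ flats 2 x.submodule ⊤, secCard K m = 2)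
include hV hbisecant

theorem le_sum_lineCard_tangents (hx : x ∈ K) (hl : l ∈ tangents K x ⊤) :
    (q ^ 2 + q : ℤ) ≤ ∑ p ∈ flats 3 x.submodule ⊤ with l ≤ p,
      (lineCard (tangents K x ⊤) (· ≤ ·) p : ℤ) * (lineCard (tangents K x ⊤) (· ≤ ·) p - 1) := by
  obtain ⟨⟨hl2, hxl, -⟩, hl1⟩ := mem_tangents.mp hl
  have hline : ∀ p ∈ flats 3 l ⊤, (lineCard (tangents K x ⊤) (· ≤ ·) p : ℤ) *
      (lineCard (tangents K x ⊤) (· ≤ ·) p - 1) = q * (q + 1 - ((secCard K p : ℤ) - 1)) -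
        ((secCard K p : ℤ) - 1) * (q + 2 - secCard K p) := fun p hp => by
    rw [← filter_flats_of_submodule_le hxl] at hp
    have := lineCard_tangents_add_secCard hcap hx (mem_filter.mp hp).1
    rw [show (lineCard (tangents K x ⊤) (· ≤ ·) p : ℤ) = q + 2 - secCard K p by omega]
    ring
  have hsum := sum_flats_sub K (le_top (a := l))
  rw [hl2, hl1, secCard_top, Nat.cast_one] at hsum
  have hle := sum_sub_one_mul_le hcap hV hbisecant hx hl
  rw [filter_flats_of_submodule_le hxl, sum_congr rfl hline, sum_sub_distrib, ← mul_sum,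
    sum_sub_distrib, hsum, sum_const, card_planes_through_line hV hl2, nsmul_eq_mul]
  push_cast
  linear_combination hle

variable (hq : 256 ≤ Fintype.card F) (ht : t + #K = Fintype.card F ^ 2 + Fintype.card F + 2)
  (htq : Fintype.card F + 1 < t) (htq' : t + 7 ≤ 3 * Fintype.card F) (hx : x ∈ K)
include hq ht htq htq' hx

-- `c` is `1` if the line `p₁ ⊓ p₂`, which lies in both planes, is a tangent, and `0` otherwise.
theorem exists_two_covering_planes : ∃ p₁ ∈ flats 3 x.submodule ⊤, ∃ p₂ ∈ flats 3 x.submodule ⊤,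
    p₁ ≠ p₂ ∧ (∀ l ∈ tangents K x ⊤, l ≤ p₁ ∨ l ≤ p₂) ∧ ∃ a ≤ 1, ∃ b ≤ 1, ∃ c ≤ (1 : ℕ),
      lineCard (tangents K x ⊤) (· ≤ ·) p₁ = q + a ∧
      lineCard (tangents K x ⊤) (· ≤ ·) p₂ = q + b ∧ t + c = 2 * q + a + b ∧ a ≤ c ∧ b ≤ c := by
  have hT := card_tangents_add_card hcap hx hV
  obtain ⟨p₁, hp₁, p₂, hp₂, hne, hcov, hq₁, hq₂⟩ := exists_two_covering_lines (by omega)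
    (isLinearSpace_tangents K x) hq
    (fun l hl => le_sum_lineCard_tangents hcap hV hbisecant hx hl) (by omega)
    fun p hp => lineCard_tangents_le hcap hx hp
  have hle₁ := lineCard_tangents_le hcap hx hp₁
  have hle₂ := lineCard_tangents_le hcap hx hp₂
  have hsum := card_tangents_of_two_covering_planes (mem_flats.mp hp₁).1 (mem_flats.mp hp₂).1
    hne hcov
  have hfull₁ := inf_mem_tangents hcap hV hx hp₁ hp₂ hne
  have hfull₂ := inf_mem_tangents hcap hV hx hp₂ hp₁ hne.symm
  rw [inf_comm] at hfull₂
  refine ⟨p₁, hp₁, p₂, hp₂, hne, hcov, _, Nat.sub_le_iff_le_add'.mpr hle₁, _,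
    Nat.sub_le_iff_le_add'.mpr hle₂, if p₁ ⊓ p₂ ∈ tangents K x ⊤ then 1 else 0, ?_,
    (Nat.add_sub_of_le hq₁).symm, (Nat.add_sub_of_le hq₂).symm, ?_, ?_, ?_⟩ <;>
  split_ifs at hsum ⊢ <;> grind

theorem planeCount_of_card_tangents :
    (t = 2 * q + 1 ∧ planeCount K x (q + 1) = q - 1) ∨
    (t + 1 = 2 * q ∧ planeCount K x (q + 2) = 1) ∨
    (t = 2 * q ∧ planeCount K x (q + 1) = 2 * q - 1 ∧ planeCount K x (q + 2) = 0) ∨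
    (t = 2 * q ∧ planeCount K x (q + 1) = 0 ∧ planeCount K x (q + 2) = q - 1) := by
  obtain ⟨p₁, hp₁, p₂, hp₂, hne, hcov, a, ha, b, hb, c, hc, h₁, h₂, htc, hac, hbc⟩ :=
    exists_two_covering_planes hcap hV hbisecant hq ht htq htq' hx
  have hT : #(tangents K x ⊤) = t := by
    have := card_tangents_add_card hcap hx hV
    omega
  have hdeg : ∀ l ∈ tangents K x ⊤, #{p ∈ flats 3 x.submodule ⊤ | l ≤ p} = q + 1 := fun l hl => by
    obtain ⟨⟨hl2, hxl, -⟩, -⟩ := mem_tangents.mp hl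
    rw [filter_flats_of_submodule_le hxl, card_planes_through_line hV hl2]
  have hlin := isLinearSpace_tangents K x
  have hone := card_lineCard_eq_one_of_two_covering_lines hlin hp₁ hp₂ hne hcov hdeg
    (by omega) (by omega)
  have hzero := card_lineCard_eq_zero_of_two_covering_lines hlin hp₁ hp₂ hne hcov hdeg
    (by omega) (by omega)
  have htc' : (t : ℤ) = 2 * q + a + b - c := by omega
  rw [← planeCount_eq_card_lineCard hcap hx (v := q + 1) rfl, hT, htc', h₁, h₂] at hone
  rw [← planeCount_eq_card_lineCard hcap hx (v := q + 2) rfl, hT,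
    card_planes_through_point hV x, htc', h₁, h₂] at hzero
  push_cast at hone hzero
  generalize planeCount K x (q + 1) = n₁ at *
  generalize planeCount K x (q + 2) = n₀ at *
  interval_cases c <;> interval_cases a <;> interval_cases b <;> ring_nf at hone hzero <;> omega

end TangentGeometry

section Divisibility

variable {F V : Type*} [Field F] [AddCommGroup V] [Module F V] [Finite V]
  {K : Finset (ℙ F V)}

local notation "q" => Fintype.card F

theorem dvd_card_mul_of_planeCount {v c : ℕ} (hcount : ∀ x ∈ K, planeCount K x v = c) :
    v ∣ #K * c := by
  let P : Finset (Submodule F V) := {p ∈ flats 3 ⊥ ⊤ | secCard K p = v}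
  have hflags := sum_card_bipartiteAbove_eq_sum_card_bipartiteBelow (s := K) (t := P)
    fun x p => x.submodule ≤ p
  have hpoint : ∀ x ∈ K, #(bipartiteAbove (fun x p => x.submodule ≤ p) P x) = c := fun x hx => by
    rw [← hcount x hx, planeCount, bipartiteAbove, filter_comm]
    congr 1
    ext p
    simp only [mem_filter, mem_flats, bot_le]
    tauto
  have hplane : ∀ p ∈ P, #(bipartiteBelow (fun x p => x.submodule ≤ p) K p) = v := fun p hp =>
    (mem_filter.mp hp).2
  rw [sum_congr rfl hpoint, sum_congr rfl hplane, sum_const, sum_const, smul_eq_mul,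
    smul_eq_mul] at hflags
  exact Dvd.intro_left _ hflags.symm

theorem eq_zero_of_planeCount {v c : ℕ} (hcount : ∀ x ∈ K, planeCount K x v = c) {e f : ℤ}
    (heq : (#K * c : ℤ) = v * e + f) (hf : |f| < v) : f = 0 := by
  have hdvd : (v : ℤ) ∣ #K * c := mod_cast dvd_card_mul_of_planeCount hcount
  rw [heq, dvd_add_right (dvd_mul_right _ _)] at hdvd
  exact Int.eq_zero_of_abs_lt_dvd hdvd hf

variable [Fintype F] (hcap : ∀ l : Submodule F V, finrank F l = 2 → secCard K l ≤ 2)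
  (hV : finrank F V = 4)
include hcap hV

theorem exists_plane_card_lt_secCard {x y : ℙ F V} (hx : x ∈ K) (hy : y ∈ K) (hxy : x ≠ y)
    (hK : q ^ 2 < #K + q) :
    ∃ p ∈ flats 3 (x.submodule ⊔ y.submodule) ⊤, q < secCard K p := by
  by_contra! hle
  have hl2 := finrank_submodule_sup_submodule hxy
  have hsum := sum_flats_sub K (le_top (a := x.submodule ⊔ y.submodule))
  rw [hl2, secCard_sup_eq_two hcap hx hy hxy, secCard_top] at hsum
  have hbound := sum_le_card_nsmul _ (fun p => (secCard K p : ℤ) - 2) ((q : ℤ) - 2) fun p hp =>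
    sub_le_sub_right (mod_cast hle p hp) 2
  rw [card_planes_through_line hV hl2, nsmul_eq_mul] at hbound
  push_cast at hsum hbound
  zify at hK
  linarith

variable [CharP F 2] (hbisecant : ∀ x ∉ K, ∃ m ∈ flats 2 x.submodule ⊤, secCard K m = 2)
  (hq : 256 ≤ Fintype.card F)
include hbisecant hq

theorem planeCount_uniform (hK : #K + q = q ^ 2 + 2) :
    (∀ x ∈ K, planeCount K x (q + 1) = 2 * q - 1) ∨ ∀ x ∈ K, planeCount K x (q + 2) = q - 1 := by
  have hlocal : ∀ x ∈ K,
      (planeCount K x (q + 1) = 2 * q - 1 ∧ planeCount K x (q + 2) = 0) ∨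
      (planeCount K x (q + 1) = 0 ∧ planeCount K x (q + 2) = q - 1) := fun x hx => by
    have := planeCount_of_card_tangents hcap hV hbisecant hq (t := 2 * q) (by omega) (by omega)
      (by omega) hx
    omega
  by_contra! hmixed
  obtain ⟨⟨x, hx, hxne⟩, y, hy, hyne⟩ := hmixed
  obtain ⟨hx₁, -⟩ := (hlocal x hx).resolve_left fun h => hxne h.1
  obtain ⟨hy₁, hy₂⟩ := (hlocal y hy).resolve_right fun h => hyne h.2
  have hxy : x ≠ y := by
    rintro rfl
    omega
  obtain ⟨p, hp, hlt⟩ := exists_plane_card_lt_secCard hcap hV hx hy hxy (by omega)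
  obtain ⟨hp3, hlp, -⟩ := mem_flats.mp hp
  have hxp : p ∈ flats 3 x.submodule ⊤ := mem_flats.mpr ⟨hp3, le_sup_left.trans hlp, le_top⟩
  have hyp : p ∈ flats 3 y.submodule ⊤ := mem_flats.mpr ⟨hp3, le_sup_right.trans hlp, le_top⟩
  have hne₁ := filter_eq_empty_iff.mp (card_eq_zero.mp hx₁) hxp
  have hne₂ := filter_eq_empty_iff.mp (card_eq_zero.mp hy₂) hyp
  have := lineCard_tangents_add_secCard hcap hx hxp
  omega

theorem card_add_two_mul_le (hK : #K < q ^ 2 + 1) : #K + 2 * q ≤ q ^ 2 + 8 := by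
  by_contra! hlt
  obtain ⟨t, ht⟩ : ∃ t, t + #K = q ^ 2 + q + 2 := ⟨q ^ 2 + q + 2 - #K, by omega⟩
  have hlocal {x} (hx : x ∈ K) := planeCount_of_card_tangents hcap hV hbisecant hq ht (by omega)
    (by omega) hx
  have hcard : (#K : ℤ) = q ^ 2 + q + 2 - t := by zify at ht; linarith
  have hq₁ : ((q - 1 : ℕ) : ℤ) = q - 1 := by omega
  have hq₂ : ((2 * q - 1 : ℕ) : ℤ) = 2 * q - 1 := by omega
  obtain ⟨x, hx⟩ : K.Nonempty := card_pos.mp (by nlinarith)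
  obtain htq | htq | htq : t = 2 * q + 1 ∨ t + 1 = 2 * q ∨ t = 2 * q := by
    have := hlocal hx
    omega
  · have hcount : ∀ x ∈ K, planeCount K x (q + 1) = q - 1 := fun x hx => by
      have := hlocal hx
      omega
    have := eq_zero_of_planeCount hcount (e := q ^ 2 - 3 * q + 5) (f := -6)
      (by rw [hcard, hq₁, htq]; push_cast; ring) (by norm_num; omega)
    omega
  · have hcount : ∀ x ∈ K, planeCount K x (q + 2) = 1 := fun x hx => by
      have := hlocal hx
      omega
    have := eq_zero_of_planeCount hcount (e := q - 3) (f := 9)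
      (by rw [hcard, show (t : ℤ) = 2 * q - 1 by omega]; push_cast; ring) (by norm_num; omega)
    omega
  · obtain hcount | hcount := planeCount_uniform hcap hV hbisecant hq (by omega)
    · have := eq_zero_of_planeCount hcount (e := 2 * q ^ 2 - 5 * q + 10) (f := -12)
        (by rw [hcard, hq₂, htq]; push_cast; ring) (by norm_num; omega)
      omega
    · have := eq_zero_of_planeCount hcount (e := q ^ 2 - 4 * q + 11) (f := -24)
        (by rw [hcard, hq₁, htq]; push_cast; ring) (by norm_num; omega)
      omega

end Divisibility

section CompleteCaps

variable {F : Type*} [Field F] {n : ℕ}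

theorem charP_two_of_even_card [Fintype F] (hF : Even (Fintype.card F)) : CharP F 2 :=
  ringChar.of_eq (FiniteField.even_card_iff_char_two.mpr (Nat.even_iff.mp hF))

theorem exists_coll3_of_isCompleteCap {K : Set (PGPoint F n)} (hK : IsCompleteCap K)
    {x : PGPoint F n} (hx : x ∉ K) : ∃ y ∈ K, ∃ z ∈ K, y ≠ z ∧ Coll3 y z x := by
  have hnot := hK.2 x hx
  unfold IsCap at hnot
  push Not at hnot
  obtain ⟨y, hy, z, hz, w, hw, hyz, hyw, hzw, hcoll⟩ := hnot
  have hyzw : ¬ (y ∈ K ∧ z ∈ K ∧ w ∈ K) := fun ⟨hy, hz, hw⟩ =>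
    hK.1 y hy z hz w hw hyz hyw hzw hcoll
  unfold Coll3 at hcoll ⊢
  rcases hy with rfl | hy
  · refine ⟨z, hz.resolve_left hyz.symm, w, hw.resolve_left hyw.symm, hzw, ?_⟩
    rwa [sup_comm, ← sup_assoc]
  rcases hz with rfl | hz
  · refine ⟨y, hy, w, hw.resolve_left hzw.symm, hyw, ?_⟩
    rwa [sup_right_comm]
  obtain rfl : w = x := hw.resolve_right fun hw => hyzw ⟨hy, hz, hw⟩
  exact ⟨y, hy, z, hz, hyz, hcoll⟩

variable {K : Finset (PGPoint F n)}

theorem secCard_le_two_of_isCap (hK : IsCap (K : Set (PGPoint F n)))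
    (l : Submodule F (Fin (n + 1) → F)) (hl : finrank F l = 2) : secCard K l ≤ 2 := by
  by_contra! hlt
  obtain ⟨x, hx, y, hy, z, hz, hxy, hxz, hyz⟩ := two_lt_card.mp hlt
  rw [mem_filter] at hx hy hz
  exact hK x hx.1 y hy.1 z hz.1 hxy hxz hyz <|
    (Submodule.finrank_mono (sup_le (sup_le hx.2 hy.2) hz.2)).trans hl.le

theorem exists_bisecant_of_isCompleteCap [Finite F] (hK : IsCompleteCap (K : Set (PGPoint F n)))
    {x : PGPoint F n} (hx : x ∉ K) : ∃ m ∈ flats 2 x.submodule ⊤, secCard K m = 2 := by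
  obtain ⟨y, hy, z, hz, hyz, hcoll⟩ := exists_coll3_of_isCompleteCap hK hx
  have hl := finrank_submodule_sup_submodule hyz
  have hxl : x.submodule ≤ y.submodule ⊔ z.submodule := by
    by_contra hxl
    have := finrank_sup_submodule hxl
    unfold Coll3 at hcoll
    omega
  exact ⟨_, mem_flats.mpr ⟨hl, hxl, le_top⟩,
    secCard_sup_eq_two (secCard_le_two_of_isCap hK.1) hy hz hyz⟩

end CompleteCaps

end CapTangents

theorem stmt8_general {F : Type*} [Field F] [Fintype F] (hF : Even (Fintype.card F))
    (hq : 256 ≤ Fintype.card F) {K : Set (PGPoint F 3)} (hK : IsCompleteCap K)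
    (hk : K.ncard < Fintype.card F ^ 2 + 1) :
    K.ncard + 2 * Fintype.card F ≤ Fintype.card F ^ 2 + 8 := by
  have : Finite (PGPoint F 3) := (Projectivization.finite_iff_of_finite F _).mpr inferInstance
  have : CharP F 2 := CapTangents.charP_two_of_even_card hF
  lift K to Finset (PGPoint F 3) using K.toFinite
  rw [Set.ncard_coe_finset] at hk ⊢
  exact CapTangents.card_add_two_mul_le (CapTangents.secCard_le_two_of_isCap hK.1) (by simp)
    (fun _ => CapTangents.exists_bisecant_of_isCompleteCap hK) hq hk

theorem stmt8 (F : Type*) [Field F] [Fintype F] (q : ℕ) (hcard : Fintype.card F = q)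
    (hqeven : Even q) (hq : 2048 ≤ q)
    (K : Set (PGPoint F 3)) (hK : IsCompleteCap K) (hk : K.ncard < q ^ 2 + 1) :
    (K.ncard : ℝ) < (q : ℝ) ^ 2 - 2 * (q : ℝ) + 3 * Real.sqrt q + 2 := by
  subst hcard
  have hbound : (K.ncard + 2 * Fintype.card F : ℝ) ≤ Fintype.card F ^ 2 + 8 :=
    mod_cast stmt8_general hqeven (by omega) hK hk
  have hsqrt : 2 < √(Fintype.card F : ℝ) := Real.lt_sqrt_of_sq_lt (by norm_cast; omega)
  linarith
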